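/- arXiv:1112.5373 — 8 statements merged into one kernel-verified Lean document; each statement's English description precedes it below -/
import Mathlib

section
/- Suppose τ : ℝ → ℝ is measurable with τ(s) ≥ s for all s, the image of ξ under τ equals η, and τ is right-stable, i.e. (ξ ⊗ ξ){(s,t) ∈ ℝ² : t < s ≤ τ(t) < τ(s)} = 0. Then τ is minimal in the following sense: if σ : ℝ → ℝ is another measurable map whose image of ξ equals η and which satisfies s ≤ σ(s) ≤ τ(s) for ξ-almost every s, then ξ{s : σ(s) < τ(s)} = 0. -/
open MeasureTheory

/-- a right-stable allocation `τ` balancing `ξ` and `η` is minimal: any other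
balancing map `σ` with `s ≤ σ(s) ≤ τ(s)` for `ξ`-a.e. `s` satisfies `ξ{σ < τ} = 0`. -/
theorem right_stable_minimal (ξ η : Measure ℝ)
    [IsLocallyFiniteMeasure ξ] [IsLocallyFiniteMeasure η]
    (hξd : ∀ x : ℝ, ξ {x} = 0) (hηd : ∀ x : ℝ, η {x} = 0)
    (hsing : ξ.MutuallySingular η)
    (τ : ℝ → ℝ) (hτm : Measurable τ) (hτge : ∀ s : ℝ, s ≤ τ s)
    (hτmap : Measure.map τ ξ = η)
    (hstable : (ξ.prod ξ) {p : ℝ × ℝ | p.2 < p.1 ∧ p.1 ≤ τ p.2 ∧ τ p.2 < τ p.1} = 0)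
    (σ : ℝ → ℝ) (hσm : Measurable σ) (hσmap : Measure.map σ ξ = η)
    (hσle : ∀ᵐ s ∂ξ, s ≤ σ s ∧ σ s ≤ τ s) :
    ξ {s : ℝ | σ s < τ s} = 0 := by
  have h1 : ∀ᵐ s ∂ξ, ∀ᵐ t ∂ξ, ¬ (t < s ∧ s ≤ τ t ∧ τ t < τ s) := by
    have h : ∀ᵐ p ∂(ξ.prod ξ), ¬ (p.2 < p.1 ∧ p.1 ≤ τ p.2 ∧ τ p.2 < τ p.1) := by
      rw [ae_iff]
      simpa only [not_not] using hstable
    exact Measure.ae_ae_of_ae_prod h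
  have h2 : ∀ᵐ t ∂ξ, ∀ᵐ s ∂ξ, ¬ (t < s ∧ s ≤ τ t ∧ τ t < τ s) := by
    refine (Measure.ae_ae_comm ?_).1 h1
    refine MeasurableSet.compl ?_
    exact (measurableSet_lt measurable_snd measurable_fst).inter
      ((measurableSet_le measurable_fst (hτm.comp measurable_snd)).inter
        (measurableSet_lt (hτm.comp measurable_snd) (hτm.comp measurable_fst)))
  have h3 : ∀ᵐ t ∂ξ, ∀ᵐ s ∂ξ, s ≤ t → ¬ (t < σ s ∧ σ s ≤ τ t) := by
    filter_upwards [h1, h2] with t a1 a2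
    have e1 : τ ⁻¹' (Set.Ioc t (τ t)) =ᵐ[ξ] Set.Ioc t (τ t) := by
      have b1 : ∀ᵐ s ∂ξ, s ≠ t := by
        rw [ae_iff]; simpa using hξd t
      have b2 : ∀ᵐ s ∂ξ, τ s ≠ τ t := by
        rw [ae_iff]
        have := hηd (τ t)
        rw [← hτmap, Measure.map_apply hτm (measurableSet_singleton _)] at this
        simpa [Set.preimage] using this
      refine Filter.eventuallyEq_set.2 ?_
      filter_upwards [a1, a2, b1, b2] with s c1 c2 c3 c4
      simp only [Set.mem_preimage, Set.mem_Ioc]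
      constructor
      · rintro ⟨d1, d2⟩
        refine ⟨?_, (hτge s).trans d2⟩
        by_contra hlt
        exact c1 ⟨lt_of_le_of_ne (not_lt.1 hlt) c3, d1.le, lt_of_le_of_ne d2 c4⟩
      · rintro ⟨d1, d2⟩
        refine ⟨d1.trans_le (hτge s), ?_⟩
        by_contra hlt
        exact c2 ⟨d1, d2, not_le.1 hlt⟩
    have e2 : ξ (σ ⁻¹' (Set.Ioc t (τ t))) = ξ (Set.Ioc t (τ t)) := by
      rw [← measure_congr e1, ← Measure.map_apply hτm measurableSet_Ioc,
        ← Measure.map_apply hσm measurableSet_Ioc, hτmap, hσmap]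
    have e3 : Set.Ioc t (τ t) ≤ᵐ[ξ] σ ⁻¹' (Set.Ioc t (τ t)) := by
      have e1' := Filter.eventuallyEq_set.1 e1
      filter_upwards [e1', hσle] with s c1 c2 d
      have d' := c1.2 d
      exact ⟨lt_of_lt_of_le d.1 c2.1, c2.2.trans d'.2⟩
    have e4 := ae_eq_of_ae_subset_of_measure_ge e3 e2.le
      measurableSet_Ioc.nullMeasurableSet
      (by rw [e2]; exact measure_Ioc_lt_top.ne)
    filter_upwards [Filter.eventuallyEq_set.1 e4] with s c1 c2 c3
    exact absurd (c1.2 c3).1 (not_lt.2 c2)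
  have h4 : ∀ᵐ s ∂ξ, σ s ≠ s := by
    obtain ⟨N, hN, n1, n2⟩ := hsing
    rw [← hσmap, Measure.map_apply hσm hN.compl] at n2
    have m1 : ∀ᵐ s ∂ξ, s ∉ N := measure_eq_zero_iff_ae_notMem.1 n1
    have m2 : ∀ᵐ s ∂ξ, s ∉ σ ⁻¹' Nᶜ := measure_eq_zero_iff_ae_notMem.1 n2
    filter_upwards [m1, m2] with s c1 c2 c3
    apply c2
    simpa [c3] using c1
  let B : ℚ → ℚ → Set ℝ := fun p q => {s | s ≤ p ∧ (p : ℝ) < σ s ∧ σ s < q ∧ (q : ℝ) ≤ τ s}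
  have hBm : ∀ p q, MeasurableSet (B p q) := fun p q =>
    (measurableSet_le measurable_id measurable_const).inter
      ((measurableSet_lt measurable_const hσm).inter
        ((measurableSet_lt hσm measurable_const).inter (measurableSet_le measurable_const hτm)))
  have hB : ∀ p q, ∀ᵐ s ∂ξ, s ∉ B p q := by
    intro p q
    have g1 : ∀ᵐ t ∂ξ, ∀ᵐ s ∂ξ, ¬ (s ≤ t ∧ s ∈ B p q ∧ t ∈ B p q) := by
      filter_upwards [h3] with t a
      filter_upwards [a] with s b
      rintro ⟨c, ⟨_, d2, d3, _⟩, ⟨f1, _, _, f4⟩⟩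
      exact b c ⟨f1.trans_lt d2, d3.le.trans f4⟩
    have g2 : ∀ᵐ s ∂ξ, ∀ᵐ t ∂ξ, ¬ (s ≤ t ∧ s ∈ B p q ∧ t ∈ B p q) := by
      refine (Measure.ae_ae_comm ?_).1 g1
      refine MeasurableSet.compl ?_
      exact (measurableSet_le measurable_snd measurable_fst).inter
        ((measurable_snd (hBm p q)).inter (measurable_fst (hBm p q)))
    by_contra hcon
    have hf : ∃ᵐ t ∂ξ, t ∈ B p q := hcon
    obtain ⟨t, ht, k1, k2⟩ := (hf.and_eventually (g1.and g2)).exists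
    apply hcon
    filter_upwards [k1, k2] with s l1 l2 hs
    rcases le_total s t with h | h
    · exact l1 ⟨h, hs, ht⟩
    · exact l2 ⟨h, ht, hs⟩
  have hB' : ∀ᵐ s ∂ξ, ∀ p q, s ∉ B p q :=
    ae_all_iff.2 fun p => ae_all_iff.2 fun q => hB p q
  refine measure_eq_zero_iff_ae_notMem.2 ?_
  filter_upwards [hB', h4, hσle] with s a b c d
  have d' : σ s < τ s := d
  obtain ⟨p, p1, p2⟩ := exists_rat_btwn (lt_of_le_of_ne c.1 b.symm)
  obtain ⟨q, q1, q2⟩ := exists_rat_btwn d'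
  exact a p q ⟨p1.le, p2, q1, q2.le⟩
end

section
/- (a) For ξ-almost every s ∈ ℝ there exists a sequence s_n with s_n > s, s_n → s, and f(s_n) > f(s) for all n. (b) For η-almost every s ∈ ℝ there exists a sequence s_n with s_n > s, s_n → s, and f(s_n) < f(s) for all n. -/
open MeasureTheory Filter

/-- The function `f(t) = ξ[0,t] − η[0,t]` for `t ≥ 0` and `f(t) = η[t,0] − ξ[t,0]` for `t < 0`. -/
noncomputable def fdiff (ξ η : Measure ℝ) (t : ℝ) : ℝ :=
  if 0 ≤ t then (ξ (Set.Icc 0 t)).toReal - (η (Set.Icc 0 t)).toReal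
  else (η (Set.Icc t 0)).toReal - (ξ (Set.Icc t 0)).toReal

lemma fd_aux (μ : Measure ℝ) [NullSingletonClass μ] (t : ℝ) :
    (if 0 ≤ t then (μ (Set.Icc 0 t)).toReal else - (μ (Set.Icc t 0)).toReal)
      = ∫ _ in (0:ℝ)..t, (1:ℝ) ∂μ := by
  split_ifs with h
  · rw [intervalIntegral.integral_of_le h, ← measure_congr (Ioc_ae_eq_Icc (μ := μ))]
    simp [Measure.real]
  · rw [intervalIntegral.integral_of_ge (le_of_not_ge h),
      ← measure_congr (Ioc_ae_eq_Icc (μ := μ))]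
    simp [Measure.real]

lemma fd_sub (ξ η : Measure ℝ) [IsLocallyFiniteMeasure ξ] [IsLocallyFiniteMeasure η]
    [NullSingletonClass ξ] [NullSingletonClass η] {s t : ℝ} (hst : s ≤ t) :
    fdiff ξ η t - fdiff ξ η s = (ξ (Set.Ioc s t)).toReal - (η (Set.Ioc s t)).toReal := by
  have key : ∀ t, fdiff ξ η t = (∫ _ in (0:ℝ)..t, (1:ℝ) ∂ξ) - ∫ _ in (0:ℝ)..t, (1:ℝ) ∂η := by
    intro t
    rw [← fd_aux, ← fd_aux, fdiff]
    split_ifs <;> ring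
  have add : ∀ (μ : Measure ℝ) [IsLocallyFiniteMeasure μ],
      (∫ _ in (0:ℝ)..t, (1:ℝ) ∂μ) = (∫ _ in (0:ℝ)..s, (1:ℝ) ∂μ) + (μ (Set.Ioc s t)).toReal := by
    intro μ _
    rw [← intervalIntegral.integral_add_adjacent_intervals (b := s)
      intervalIntegrable_const intervalIntegrable_const,
      intervalIntegral.integral_of_le hst]
    simp [Measure.real]
  rw [key, key, add ξ, add η]; ring

lemma fd_le (ξ η : Measure ℝ) [IsLocallyFiniteMeasure ξ] [IsLocallyFiniteMeasure η]
    [NullSingletonClass ξ] [NullSingletonClass η] {s t : ℝ} (hst : s ≤ t)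
    (h : fdiff ξ η t ≤ fdiff ξ η s) : ξ (Set.Ioc s t) ≤ η (Set.Ioc s t) := by
  have := fd_sub ξ η hst
  exact (ENNReal.toReal_le_toReal measure_Ioc_lt_top.ne measure_Ioc_lt_top.ne).1 (by linarith)

lemma fd_comp (ξ η : Measure ℝ) [NullSingletonClass ξ] (B C : Set ℝ) (hC : IsOpen C)
    (hoc : C.OrdConnected)
    (h : ∀ s ∈ B, ∀ t ∈ C, s < t → ξ (Set.Ioc s t) ≤ η (Set.Ioc s t)) :
    ξ (B ∩ C) ≤ η C := by
  have h1 : ∀ s ∈ B ∩ C, ξ (C ∩ Set.Ioi s) ≤ η C := by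
    rintro s ⟨hsB, hsC⟩
    obtain ⟨D, hDC, hDc, hD⟩ := TopologicalSpace.isOpen_biUnion_countable C
      (fun t : ℝ => Set.Iio t) (fun _ _ => isOpen_Iio)
    have hsub : C ∩ Set.Ioi s ⊆ ⋃ t ∈ D, Set.Ioc s t := by
      rintro x ⟨hx, hsx⟩
      obtain ⟨b, hb, hb2⟩ := ((hC.eventually_mem hx).filter_mono
        nhdsWithin_le_nhds |>.and (self_mem_nhdsWithin (s := Set.Ioi x))).exists
      have : x ∈ ⋃ t ∈ C, Set.Iio t := Set.mem_biUnion hb hb2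
      rw [← hD] at this
      simp only [Set.mem_iUnion] at this ⊢
      obtain ⟨t, ht, hxt⟩ := this
      exact ⟨t, ht, hsx, le_of_lt hxt⟩
    refine (measure_mono hsub).trans ?_
    rw [measure_biUnion_eq_iSup hDc]
    · refine iSup₂_le fun t ht => ?_
      rcases lt_or_ge s t with hst | hst
      · refine (h s hsB t (hDC ht) hst).trans (measure_mono ?_)
        exact Set.Ioc_subset_Icc_self.trans (hoc.out hsC (hDC ht))
      · simp [Set.Ioc_eq_empty_of_le hst]
    · intro a ha b hb
      rcases le_total a b with hab | hab
      · exact ⟨b, hb, Set.Ioc_subset_Ioc_right hab, subset_rfl⟩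
      · exact ⟨a, ha, subset_rfl, Set.Ioc_subset_Ioc_right hab⟩
  obtain ⟨D, hDC, hDc, hD⟩ := TopologicalSpace.isOpen_biUnion_countable (B ∩ C)
      (fun t : ℝ => Set.Ioi t) (fun _ _ => isOpen_Ioi)
  set M := (B ∩ C) \ ⋃ t ∈ (B ∩ C), Set.Ioi t with hM
  have hM0 : ξ M = 0 := by
    apply Set.Subsingleton.measure_zero
    rintro x ⟨hx, hx'⟩ y ⟨hy, hy'⟩
    simp only [Set.mem_iUnion, Set.mem_Ioi, not_exists, not_lt] at hx' hy'
    exact le_antisymm (hx' y hy) (hy' x hx)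
  have hsub : B ∩ C ⊆ M ∪ ⋃ t ∈ D, (C ∩ Set.Ioi t) := by
    intro x hx
    by_cases hxM : x ∈ M
    · exact Or.inl hxM
    · right
      have : x ∈ ⋃ t ∈ (B ∩ C), Set.Ioi t := by
        by_contra h; exact hxM ⟨hx, h⟩
      rw [← hD] at this
      simp only [Set.mem_iUnion] at this ⊢
      obtain ⟨t, ht, hxt⟩ := this
      exact ⟨t, ht, hx.2, hxt⟩
  refine (measure_mono hsub).trans ((measure_union_le _ _).trans ?_)
  rw [hM0, zero_add, measure_biUnion_eq_iSup hDc]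
  · exact iSup₂_le fun t ht => h1 t (hDC ht)
  · intro a ha b hb
    rcases le_total a b with hab | hab
    · exact ⟨a, ha, subset_rfl, Set.inter_subset_inter_right _ (Set.Ioi_subset_Ioi hab)⟩
    · exact ⟨b, hb, Set.inter_subset_inter_right _ (Set.Ioi_subset_Ioi hab), subset_rfl⟩

lemma fd_open (ξ η : Measure ℝ) [NullSingletonClass ξ] (B U : Set ℝ) (hU : IsOpen U)
    (hBU : B ⊆ U)
    (h : ∀ s ∈ B, ∀ t ∈ U, s < t → ξ (Set.Ioc s t) ≤ η (Set.Ioc s t)) :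
    ξ B ≤ η U := by
  set S : Set (Set ℝ) := (fun x => Set.ordConnectedComponent U x) '' U with hS
  have hopen : ∀ C ∈ S, IsOpen C := by
    rintro _ ⟨x, hx, rfl⟩
    rw [isOpen_iff_mem_nhds]
    intro y hy
    simp only
    rw [Set.ordConnectedComponent_eq hy]
    exact Set.ordConnectedComponent_mem_nhds.2
      (hU.mem_nhds (Set.ordConnectedComponent_subset hy))
  have hsubU : ∀ C ∈ S, C ⊆ U := by
    rintro _ ⟨x, hx, rfl⟩
    exact Set.ordConnectedComponent_subset
  have hdisj : S.PairwiseDisjoint id := by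
    rintro _ ⟨x, hx, rfl⟩ _ ⟨y, hy, rfl⟩ hne
    rw [Function.onFun, Set.disjoint_left]
    intro z hz hz'
    apply hne
    simp only [id] at hz hz' ⊢
    rw [Set.ordConnectedComponent_eq hz, Set.ordConnectedComponent_eq hz']
  have hcount : S.Countable := by
    refine hdisj.countable_of_isOpen hopen ?_
    rintro _ ⟨x, hx, rfl⟩
    exact ⟨x, Set.self_mem_ordConnectedComponent.2 hx⟩
  calc ξ B ≤ ξ (⋃ C ∈ S, B ∩ C) := by
        apply measure_mono
        intro x hx
        refine Set.mem_biUnion (Set.mem_image_of_mem _ (hBU hx)) ⟨hx, ?_⟩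
        exact Set.self_mem_ordConnectedComponent.2 (hBU hx)
    _ ≤ ∑' C : S, ξ (B ∩ C) := measure_biUnion_le ξ hcount _
    _ ≤ ∑' C : S, η (C : Set ℝ) := by
        refine ENNReal.tsum_le_tsum fun ⟨C, hC⟩ => ?_
        refine fd_comp ξ η B C (hopen C hC) ?_ fun s hs t ht => h s hs t (hsubU C hC ht)
        obtain ⟨x, hx, rfl⟩ := hC
        infer_instance
    _ = η (⋃ C ∈ S, C) := (measure_biUnion hcount hdisj
        fun C hC => (hopen C hC).measurableSet).symm
    _ ≤ η U := measure_mono (Set.iUnion₂_subset hsubU)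

lemma fd_main (ξ η : Measure ℝ)
    [IsLocallyFiniteMeasure ξ] [IsLocallyFiniteMeasure η]
    [NullSingletonClass ξ] [NullSingletonClass η]
    (hsing : ξ.MutuallySingular η) :
    ∀ᵐ s ∂ξ, ∃ u : ℕ → ℝ, (∀ n, s < u n) ∧ Tendsto u atTop (nhds s) ∧
      ∀ n, fdiff ξ η s < fdiff ξ η (u n) := by
  obtain ⟨N, hN, hξN, hηN⟩ := hsing
  have hq : ∀ q : ℚ, ∀ᵐ (s : ℝ) ∂ξ,
      ¬ (s < (q:ℝ) ∧ ∀ t ∈ Set.Ioo s (q:ℝ), fdiff ξ η t ≤ fdiff ξ η s) := by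
    intro q
    set P := {s : ℝ | s < q ∧ ∀ t ∈ Set.Ioo s (q:ℝ), fdiff ξ η t ≤ fdiff ξ η s} with hP
    have hB : ξ (P ∩ Nᶜ) = 0 := by
      by_contra hne
      obtain ⟨U, hBU, hU, hlt⟩ := Set.exists_isOpen_lt_of_lt (μ := η) (P ∩ Nᶜ) (ξ (P ∩ Nᶜ))
        (by rw [measure_mono_null Set.inter_subset_right hηN]; exact pos_iff_ne_zero.2 hne)
      have := fd_open ξ η (P ∩ Nᶜ) (U ∩ Set.Iio (q:ℝ)) (hU.inter isOpen_Iio)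
        (fun x hx => ⟨hBU hx, hx.1.1⟩)
        (fun s hs t ht hst => fd_le ξ η hst.le (hs.1.2 t ⟨hst, ht.2⟩))
      exact absurd (this.trans (measure_mono Set.inter_subset_left)) (not_le.2 hlt)
    have : ξ P = 0 := by
      refine measure_mono_null (t := (P ∩ Nᶜ) ∪ N) ?_ (measure_union_null hB hξN)
      intro x hx
      by_cases h : x ∈ N
      · exact Or.inr h
      · exact Or.inl ⟨hx, h⟩
    rw [ae_iff]; simpa [hP] using this
  filter_upwards [ae_all_iff.2 hq] with s hs
  have hf : ∃ᶠ t in nhdsWithin s (Set.Ioi s), s < t ∧ fdiff ξ η s < fdiff ξ η t := by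
    intro hev
    obtain ⟨b, hb, hb'⟩ := mem_nhdsGT_iff_exists_Ioo_subset.1 hev
    obtain ⟨q, hq1, hq2⟩ := exists_rat_btwn (Set.mem_Ioi.1 hb)
    refine hs q ⟨hq1, fun t ht => ?_⟩
    have := hb' ⟨ht.1, ht.2.trans hq2⟩
    by_contra hc
    exact this ⟨ht.1, not_le.1 hc⟩
  obtain ⟨u, hu, hu'⟩ := exists_seq_forall_of_frequently hf
  exact ⟨u, fun n => (hu' n).1, hu.mono_right nhdsWithin_le_nhds, fun n => (hu' n).2⟩

/-- (a) for `ξ`-a.e. `s` there is a sequence `sₙ ↓ s`, `sₙ > s`, with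
`f(sₙ) > f(s)`; (b) for `η`-a.e. `s` there is a sequence `sₙ ↓ s`, `sₙ > s`, with
`f(sₙ) < f(s)`. -/
theorem fdiff_increase_decrease (ξ η : Measure ℝ)
    [IsLocallyFiniteMeasure ξ] [IsLocallyFiniteMeasure η]
    (hξd : ∀ x : ℝ, ξ {x} = 0) (hηd : ∀ x : ℝ, η {x} = 0)
    (hsing : ξ.MutuallySingular η) :
    (∀ᵐ s ∂ξ, ∃ u : ℕ → ℝ, (∀ n, s < u n) ∧ Tendsto u atTop (nhds s) ∧
      ∀ n, fdiff ξ η s < fdiff ξ η (u n)) ∧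
    (∀ᵐ s ∂η, ∃ u : ℕ → ℝ, (∀ n, s < u n) ∧ Tendsto u atTop (nhds s) ∧
      ∀ n, fdiff ξ η (u n) < fdiff ξ η s) := by
  have : NullSingletonClass ξ := ⟨hξd⟩
  have : NullSingletonClass η := ⟨hηd⟩
  refine ⟨fd_main ξ η hsing, ?_⟩
  have hneg : ∀ t, fdiff η ξ t = - fdiff ξ η t := by
    intro t; unfold fdiff; split_ifs <;> ring
  filter_upwards [fd_main η ξ hsing.symm] with s hs
  obtain ⟨u, h1, h2, h3⟩ := hs
  refine ⟨u, h1, h2, fun n => ?_⟩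
  have := h3 n
  rw [hneg, hneg] at this
  linarith
end

section
/- Fix a > 0 and suppose f(t) ≥ 0 for all t ∈ (0,a). Then the image of ξ under τ agrees with η on [0,a]: for every Borel set C ⊆ [0,a], ξ{s ∈ ℝ : τ(s) ∈ C} = η(C). -/
open MeasureTheory

/-- `τ(s) = inf {t > s : ξ[s,t] = η[s,t]}`, with values in `(−∞,∞]` (i.e. `EReal`),
`inf ∅ = ∞`. -/
noncomputable def tauE (ξ η : Measure ℝ) (s : ℝ) : EReal :=
  sInf {x : EReal | ∃ t : ℝ, s < t ∧ ξ (Set.Icc s t) = η (Set.Icc s t) ∧ x = (t : EReal)}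

lemma aux_level {F : ℝ → ℝ} (hFc : Continuous F) {l b c : ℝ} (hlb : l ≤ b)
    (h1 : F l ≤ c) (h2 : c ≤ F b) :
    ∃ α ∈ Set.Icc l b, F α = c ∧ ∀ s ∈ Set.Icc l b, (∃ t ∈ Set.Icc s b, F t ≤ c) ↔ s ≤ α := by
  have hK : IsCompact (Set.Icc l b ∩ F ⁻¹' Set.Iic c) :=
    isCompact_Icc.inter_right (isClosed_Iic.preimage hFc)
  obtain ⟨α, ⟨hα, hαc⟩, hmax⟩ := hK.exists_isGreatest ⟨l, ⟨le_rfl, hlb⟩, h1⟩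
  refine ⟨α, hα, ?_, ?_⟩
  · obtain ⟨x, hx, hxc⟩ := intermediate_value_Icc hα.2 hFc.continuousOn
      (show c ∈ Set.Icc (F α) (F b) from ⟨hαc, h2⟩)
    have : x ≤ α := hmax ⟨⟨hα.1.trans hx.1, hx.2⟩, hxc.le⟩
    have : x = α := le_antisymm this hx.1
    rw [← this, hxc]
  · intro s hs
    constructor
    · rintro ⟨t, ht, htc⟩
      exact ht.1.trans (hmax ⟨⟨hs.1.trans ht.1, ht.2⟩, htc⟩)
    · intro h
      exact ⟨α, ⟨h, hα.2⟩, hαc⟩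

lemma aux_inc {ξ η : Measure ℝ}
    [IsLocallyFiniteMeasure ξ] [IsLocallyFiniteMeasure η] {F : ℝ → ℝ}
    (hF : ∀ u v, u ≤ v → F v - F u = (ξ (Set.Ioc u v)).toReal - (η (Set.Ioc u v)).toReal)
    {u v : ℝ} (huv : u ≤ v) (h : F u ≤ F v) :
    ξ (Set.Ioc u v) = η (Set.Ioc u v) + ENNReal.ofReal (F v - F u) := by
  have h1 : ξ (Set.Ioc u v) ≠ ⊤ := measure_Ioc_lt_top.ne
  have h2 : η (Set.Ioc u v) ≠ ⊤ := measure_Ioc_lt_top.ne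
  rw [← ENNReal.ofReal_toReal h1, ← ENNReal.ofReal_toReal h2, ← ENNReal.ofReal_add
    ENNReal.toReal_nonneg (by linarith), hF u v huv]
  congr 1
  ring

lemma aux_core {ξ η : Measure ℝ}
    [IsLocallyFiniteMeasure ξ] [IsLocallyFiniteMeasure η]
    (hξd : ∀ x : ℝ, ξ {x} = 0) (hηd : ∀ x : ℝ, η {x} = 0)
    (hsing : ξ.MutuallySingular η) {F : ℝ → ℝ} (hFc : Continuous F)
    (hF : ∀ u v, u ≤ v → F v - F u = (ξ (Set.Ioc u v)).toReal - (η (Set.Ioc u v)).toReal)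
    {l b : ℝ} (hlb : l ≤ b) (hmin : ∀ t ∈ Set.Icc l b, F l ≤ F t) :
    η {s | s ∈ Set.Icc l b ∧ ∀ t ∈ Set.Ioc s b, F s < F t} = 0 ∧
    ξ {s | s ∈ Set.Icc l b ∧ ∀ t ∈ Set.Ioc s b, F s < F t} = ENNReal.ofReal (F b - F l) := by
  have : NullSingletonClass ξ := ⟨hξd⟩
  have : NullSingletonClass η := ⟨hηd⟩
  set E := {s | s ∈ Set.Icc l b ∧ ∀ t ∈ Set.Ioc s b, F s < F t} with hE
  -- the running minimum
  have hGex : ∀ s, ∃ t ∈ Set.Icc (min s b) b, ∀ r ∈ Set.Icc (min s b) b, F t ≤ F r := fun s => by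
    obtain ⟨t, ht, h⟩ := isCompact_Icc.exists_isMinOn (s := Set.Icc (min s b) b)
      ⟨b, min_le_right _ _, le_rfl⟩ hFc.continuousOn
    exact ⟨t, ht, fun r hr => h hr⟩
  choose p hp hpm using hGex
  set G : ℝ → ℝ := fun s => F (p s) with hG
  have hGm : Monotone G := fun s s' h => hpm s _ ⟨(min_le_min_right b h).trans (hp s').1, (hp s').2⟩
  have hGle : ∀ s c, s ≤ b → (G s ≤ c ↔ ∃ t ∈ Set.Icc s b, F t ≤ c) := by
    intro s c hs
    have h1 := hp s
    have h2 := hpm s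
    rw [min_eq_left hs] at h1 h2
    exact ⟨fun h => ⟨p s, h1, h⟩, fun ⟨t, ht, h⟩ => (h2 t ht).trans h⟩
  have hGF : ∀ s ∈ E, G s = F s := by
    intro s hs
    apply le_antisymm ((hGle s _ hs.1.2).2 ⟨s, ⟨le_rfl, hs.1.2⟩, le_rfl⟩)
    obtain ⟨t, ht, h⟩ := (hGle s (G s) hs.1.2).1 le_rfl
    rcases ht.1.eq_or_lt with h' | h'
    · rw [← h'] at h; exact h
    · exact (hs.2 t ⟨h', ht.2⟩).le.trans h
  have hGl : ∀ s ∈ Set.Icc l b, F l ≤ G s := by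
    intro s hs
    have h1 := hp s
    rw [min_eq_left hs.2] at h1
    exact hmin _ ⟨hs.1.trans h1.1, h1.2⟩
  have hPQ : (ξ.restrict (Set.Ioc l b)).map G =
      (η.restrict (Set.Ioc l b)).map G + volume.restrict (Set.Ioc (F l) (F b)) := by
    have : IsFiniteMeasure (ξ.restrict (Set.Ioc l b)) :=
      ⟨by rw [Measure.restrict_apply_univ]; exact measure_Ioc_lt_top⟩
    apply Measure.ext_of_Iic
    intro c
    rw [Measure.add_apply, Measure.map_apply hGm.measurable measurableSet_Iic,
      Measure.map_apply hGm.measurable measurableSet_Iic,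
      Measure.restrict_apply (hGm.measurable measurableSet_Iic),
      Measure.restrict_apply (hGm.measurable measurableSet_Iic),
      Measure.restrict_apply measurableSet_Iic]
    rcases lt_or_ge c (F l) with hc | hc
    · have e1 : G ⁻¹' Set.Iic c ∩ Set.Ioc l b = ∅ := by
        ext s
        simp only [Set.mem_inter_iff, Set.mem_preimage, Set.mem_Iic, Set.mem_empty_iff_false,
          iff_false, not_and]
        intro h hs
        linarith [hGl s ⟨hs.1.le, hs.2⟩]
      have e2 : Set.Iic c ∩ Set.Ioc (F l) (F b) = ∅ := by
        ext s
        simp only [Set.mem_inter_iff, Set.mem_Iic, Set.mem_Ioc, Set.mem_empty_iff_false,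
          iff_false, not_and]
        intro h hs
        linarith
      rw [e1, e2]; simp
    · have hFlb := hmin b ⟨hlb, le_rfl⟩
      obtain ⟨α, hα, hFα, h⟩ := aux_level hFc hlb (c := min c (F b)) (le_min hc hFlb)
        (min_le_right _ _)
      have e1 : G ⁻¹' Set.Iic c ∩ Set.Ioc l b = Set.Ioc l α := by
        ext s
        simp only [Set.mem_inter_iff, Set.mem_preimage, Set.mem_Iic, Set.mem_Ioc]
        constructor
        · rintro ⟨h1, h2⟩
          refine ⟨h2.1, (h s ⟨h2.1.le, h2.2⟩).1 ((hGle s _ h2.2).1 (le_min h1 ?_))⟩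
          exact (hGle s _ h2.2).2 ⟨b, ⟨h2.2, le_rfl⟩, le_rfl⟩
        · rintro ⟨h1, h2⟩
          have h3 : s ≤ b := h2.trans hα.2
          exact ⟨((hGle s _ h3).2 ((h s ⟨h1.le, h3⟩).2 h2)).trans (min_le_left _ _), h1, h3⟩
      have e2 : Set.Iic c ∩ Set.Ioc (F l) (F b) = Set.Ioc (F l) (min c (F b)) := by
        ext s
        simp only [Set.mem_inter_iff, Set.mem_Iic, Set.mem_Ioc, le_min_iff]
        tauto
      rw [e1, e2, Real.volume_Ioc, ← hFα]
      exact aux_inc hF hα.1 (hmin α hα)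
  set N := {c | ∃ x y, x < y ∧ G x = c ∧ G y = c} with hN
  have hNc : N.Countable := hGm.countable_setOfPred_two_preimages
  have hNm : MeasurableSet N := hNc.measurableSet
  set D := G ⁻¹' Nᶜ ∩ Set.Ioc l b with hD
  have hDm : MeasurableSet D := (hGm.measurable hNm.compl).inter measurableSet_Ioc
  have hinj : ∀ s s', G s = G s' → G s ∉ N → s = s' := by
    intro s s' h hn
    rcases lt_trichotomy s s' with h' | h' | h'
    · exact absurd ⟨s, s', h', rfl, h.symm⟩ hn
    · exact h'
    · exact absurd ⟨s', s, h', h.symm, rfl⟩ hn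
  have hDE : D ⊆ E := by
    rintro s ⟨hs1, hs2⟩
    refine ⟨⟨hs2.1.le, hs2.2⟩, ?_⟩
    intro t ht
    by_contra hcon
    push Not at hcon
    obtain ⟨t0, ht0, h0⟩ := (hGle s (G s) hs2.2).1 le_rfl
    have : ∃ t1 ∈ Set.Ioc s b, F t1 ≤ G s := by
      rcases ht0.1.eq_or_lt with h' | h'
      · exact ⟨t, ht, by rw [← h'] at h0; linarith⟩
      · exact ⟨t0, ⟨h', ht0.2⟩, h0⟩
    obtain ⟨t1, ht1, h1⟩ := this
    have h2 : G t1 ≤ G s := (hGle t1 _ ht1.2).2 ⟨t1, ⟨le_rfl, ht1.2⟩, h1⟩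
    have h3 : G s = G t1 := le_antisymm (hGm ht1.1.le) h2
    exact ht1.1.ne (hinj _ _ h3 hs1)
  have hEi : Set.InjOn G E := by
    intro s hs t ht h
    rw [hGF s hs, hGF t ht] at h
    rcases lt_trichotomy s t with h' | h' | h'
    · exact absurd h (hs.2 t ⟨h', ht.1.2⟩).ne
    · exact h'
    · exact absurd h (ht.2 s ⟨h', hs.1.2⟩).ne'
  have hEDc : (E \ D).Countable := by
    have h1 : (E ∩ G ⁻¹' N).Countable :=
      Set.MapsTo.countable_of_injOn (f := G) (t := N) (fun s hs => hs.2)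
        (hEi.mono Set.inter_subset_left) hNc
    refine (h1.union (Set.countable_singleton l)).mono ?_
    rintro s ⟨hs, hsD⟩
    by_cases hsN : G s ∈ N
    · exact Or.inl ⟨hs, hsN⟩
    · right
      by_contra hne
      exact hsD ⟨hsN, lt_of_le_of_ne hs.1.1 (Ne.symm hne), hs.1.2⟩
  have hval : ∀ μ : Measure ℝ, [NullSingletonClass μ] → μ E = μ D := by
    intro μ _
    apply le_antisymm _ (measure_mono hDE)
    calc μ E ≤ μ (D ∪ E \ D) := measure_mono (by intro s hs; by_cases h : s ∈ D <;> simp [h, hs])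
      _ ≤ μ D + μ (E \ D) := measure_union_le _ _
      _ = μ D := by rw [hEDc.measure_zero, add_zero]
  -- push-forward identity on subsets of `D`
  have hηD : η D = 0 := by
    obtain ⟨A, hAm, hA1, hA2⟩ := hsing
    have hBm : MeasurableSet (D ∩ A) := hDm.inter hAm
    have hGB : MeasurableSet (G '' (D ∩ A)) := hBm.image_of_measurable_injOn hGm.measurable
      (hEi.mono (Set.inter_subset_left.trans hDE))
    have hpre : G ⁻¹' (G '' (D ∩ A)) ∩ Set.Ioc l b = D ∩ A := by
      ext s
      constructor
      · rintro ⟨⟨s', hs', h⟩, hs⟩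
        have := hinj s' s h hs'.1.1
        rwa [← this]
      · intro hs
        exact ⟨⟨s, hs, rfl⟩, hs.1.2⟩
    have h := congrArg (fun μ : Measure ℝ => μ (G '' (D ∩ A))) hPQ
    simp only [Measure.add_apply] at h
    rw [Measure.map_apply hGm.measurable hGB, Measure.map_apply hGm.measurable hGB,
      Measure.restrict_apply (hGm.measurable hGB), Measure.restrict_apply (hGm.measurable hGB),
      hpre] at h
    have h0 : ξ (D ∩ A) = 0 := measure_mono_null Set.inter_subset_right hA1
    rw [h0] at h
    have h1 : η (D ∩ A) = 0 := by
      have := h.symm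
      rw [add_eq_zero] at this
      exact this.1
    have h2 : η (D \ A) = 0 := measure_mono_null (fun s hs => hs.2) hA2
    rw [← measure_inter_add_sdiff D hAm, h1, h2, add_zero]
  refine ⟨by rw [hval η, hηD], ?_⟩
  rw [hval ξ]
  have h := congrArg (fun μ : Measure ℝ => μ Nᶜ) hPQ
  simp only [Measure.add_apply] at h
  rw [Measure.map_apply hGm.measurable hNm.compl, Measure.map_apply hGm.measurable hNm.compl,
      Measure.restrict_apply (hGm.measurable hNm.compl),
      Measure.restrict_apply (hGm.measurable hNm.compl), ← hD, hηD, zero_add] at h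
  rw [h, measure_compl hNm (by rw [hNc.measure_zero]; simp), hNc.measure_zero,
    Measure.restrict_apply_univ, Real.volume_Ioc, tsub_zero]

lemma aux_null {ξ η : Measure ℝ}
    [IsLocallyFiniteMeasure ξ] [IsLocallyFiniteMeasure η]
    (hξd : ∀ x : ℝ, ξ {x} = 0) (hηd : ∀ x : ℝ, η {x} = 0)
    (hsing : ξ.MutuallySingular η) {F : ℝ → ℝ} (hFc : Continuous F)
    (hF : ∀ u v, u ≤ v → F v - F u = (ξ (Set.Ioc u v)).toReal - (η (Set.Ioc u v)).toReal)
    {l b : ℝ} (hlb : l ≤ b) :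
    ξ {s | s ∈ Set.Icc l b ∧ ∀ t ∈ Set.Ioc s b, F t < F s} = 0 := by
  obtain ⟨m, hm, hmax⟩ := isCompact_Icc.exists_isMaxOn (s := Set.Icc l b)
      ⟨b, hlb, le_rfl⟩ hFc.continuousOn
  have h := (aux_core hηd hξd hsing.symm (F := fun t => - F t) hFc.neg
    (fun u v h => by have := hF u v h; linarith) hm.2
    (fun t ht => neg_le_neg (hmax ⟨hm.1.trans ht.1, ht.2⟩))).1
  refine measure_mono_null ?_ h
  rintro s ⟨hs, hs'⟩
  refine ⟨⟨?_, hs.2⟩, fun t ht => neg_lt_neg (hs' t ht)⟩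
  by_contra hlt
  push Not at hlt
  have h1 := hs' m ⟨hlt, hm.2⟩
  have h2 : F s ≤ F m := hmax hs
  linarith

lemma aux_meas {F : ℝ → ℝ} (hFc : Continuous F) (q : ℝ) :
    MeasurableSet {s | ∃ t ∈ Set.Ioc s q, F t = F s} := by
  have : {s | ∃ t ∈ Set.Ioc s q, F t = F s} = ⋃ n : ℕ, Prod.fst ''
      ((Set.Icc (-(n:ℝ)) n ×ˢ Set.Icc (-(n:ℝ)) n) ∩
        {x : ℝ × ℝ | x.1 + 1 / ((n:ℝ) + 1) ≤ x.2 ∧ x.2 ≤ q ∧ F x.2 = F x.1}) := by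
    ext s
    simp only [Set.mem_ofPred_eq, Set.mem_iUnion, Set.mem_image, Prod.exists, Set.mem_inter_iff,
      Set.mem_prod]
    constructor
    · rintro ⟨t, ht, h⟩
      obtain ⟨n1, h1⟩ := exists_nat_ge |s|
      obtain ⟨n2, h2⟩ := exists_nat_ge |t|
      obtain ⟨n3, h3⟩ := exists_nat_one_div_lt (sub_pos.2 ht.1)
      let n := max n1 (max n2 n3)
      have e1 : (n1 : ℝ) ≤ n := by exact_mod_cast le_max_left _ _
      have e2 : (n2 : ℝ) ≤ n := by
        exact_mod_cast (le_max_left n2 n3).trans (le_max_right _ _)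
      have e3 : (n3 : ℝ) ≤ n := by
        exact_mod_cast (le_max_right n2 n3).trans (le_max_right _ _)
      have e4 : 1 / ((n:ℝ) + 1) ≤ 1 / ((n3:ℝ) + 1) :=
        one_div_le_one_div_of_le (by positivity) (by linarith)
      exact ⟨n, s, t, ⟨⟨abs_le.1 (h1.trans e1), abs_le.1 (h2.trans e2)⟩, by linarith, ht.2, h⟩, rfl⟩
    · rintro ⟨n, s', t, ⟨-, h1, h2, h3⟩, rfl⟩
      have : 0 < 1 / ((n:ℝ) + 1) := by positivity
      exact ⟨t, ⟨by linarith, h2⟩, h3⟩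
  rw [this]
  refine MeasurableSet.iUnion fun n => IsClosed.measurableSet (IsCompact.isClosed ?_)
  refine IsCompact.image (IsCompact.inter_right (isCompact_Icc.prod isCompact_Icc) ?_)
    continuous_fst
  refine IsClosed.and (isClosed_le (by fun_prop) (by fun_prop)) (IsClosed.and
    (isClosed_le (by fun_prop) (by fun_prop)) (isClosed_eq (by fun_prop) (by fun_prop)))

lemma aux_fdiff {ξ η : Measure ℝ}
    [IsLocallyFiniteMeasure ξ] [IsLocallyFiniteMeasure η]
    (hξd : ∀ x : ℝ, ξ {x} = 0) (hηd : ∀ x : ℝ, η {x} = 0) :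
    Continuous (fdiff ξ η) ∧ ∀ u v, u ≤ v → fdiff ξ η v - fdiff ξ η u =
      (ξ (Set.Ioc u v)).toReal - (η (Set.Ioc u v)).toReal := by
  have : NullSingletonClass ξ := ⟨hξd⟩
  have : NullSingletonClass η := ⟨hηd⟩
  have key : fdiff ξ η = fun t => (∫ _ in (0:ℝ)..t, (1:ℝ) ∂ξ) - ∫ _ in (0:ℝ)..t, (1:ℝ) ∂η := by
    ext t
    unfold fdiff
    rw [intervalIntegral.integral_const', intervalIntegral.integral_const']
    split_ifs with h
    · simp [Set.Ioc_eq_empty (not_lt.2 h), Measure.real, measure_congr Ioc_ae_eq_Icc]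
    · push Not at h
      simp [Set.Ioc_eq_empty (not_lt.2 h.le), Measure.real, measure_congr Ioc_ae_eq_Icc]
      ring
  have hi : ∀ (μ : Measure ℝ) [IsLocallyFiniteMeasure μ] (a b : ℝ),
      IntervalIntegrable (fun _ => (1:ℝ)) μ a b := fun μ _ a b => intervalIntegrable_const
  refine ⟨?_, ?_⟩
  · rw [key]
    exact (intervalIntegral.continuous_primitive (hi ξ) 0).sub
      (intervalIntegral.continuous_primitive (hi η) 0)
  · intro u v huv
    rw [key]
    simp only
    have e1 := intervalIntegral.integral_interval_sub_left (hi ξ 0 v) (hi ξ 0 u)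
    have e2 := intervalIntegral.integral_interval_sub_left (hi η 0 v) (hi η 0 u)
    have k : ∀ μ : Measure ℝ, ∫ _ in u..v, (1:ℝ) ∂μ = (μ (Set.Ioc u v)).toReal := by
      intro μ
      rw [intervalIntegral.integral_const']
      simp [Set.Ioc_eq_empty (not_lt.2 huv), Measure.real]
    rw [← k ξ, ← k η, ← e1, ← e2]
    ring

lemma aux_tau_lt {ξ η : Measure ℝ} {F : ℝ → ℝ}
    (hE : ∀ s t, s < t → (ξ (Set.Icc s t) = η (Set.Icc s t) ↔ F t = F s)) (s : ℝ) (x : EReal) :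
    tauE ξ η s < x ↔ ∃ t, s < t ∧ F t = F s ∧ (t : EReal) < x := by
  unfold tauE
  rw [sInf_lt_iff]
  constructor
  · rintro ⟨_, ⟨t, h1, h2, rfl⟩, h3⟩
    exact ⟨t, h1, (hE s t h1).1 h2, h3⟩
  · rintro ⟨t, h1, h2, h3⟩
    exact ⟨_, ⟨t, h1, (hE s t h1).2 h2, rfl⟩, h3⟩

lemma aux_tau_ge {ξ η : Measure ℝ} (s : ℝ) : (s : EReal) ≤ tauE ξ η s := by
  unfold tauE
  apply le_sInf
  rintro _ ⟨t, h1, h2, rfl⟩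
  exact_mod_cast h1.le

lemma aux_tau_att {ξ η : Measure ℝ} {F : ℝ → ℝ} (hFc : Continuous F)
    (hE : ∀ s t, s < t → (ξ (Set.Icc s t) = η (Set.Icc s t) ↔ F t = F s)) {s t : ℝ}
    (hst : s < t) (h : tauE ξ η s = (t : EReal)) : F t = F s := by
  by_contra hne
  have hev : ∀ᶠ r in nhds t, F r ≠ F s := hFc.continuousAt.eventually_ne hne
  obtain ⟨ε, hε, hb⟩ := Metric.eventually_nhds_iff.1 hev
  have : tauE ξ η s < ((t + ε : ℝ) : EReal) := by
    rw [h]; exact_mod_cast (by linarith)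
  obtain ⟨r, hr1, hr2, hr3⟩ := (aux_tau_lt hE s _).1 this
  have hr3' : r < t + ε := by exact_mod_cast hr3
  have hr4 : t ≤ r := by
    by_contra hlt
    push Not at hlt
    have : tauE ξ η s < (t : EReal) := (aux_tau_lt hE s _).2 ⟨r, hr1, hr2, by exact_mod_cast hlt⟩
    rw [h] at this
    exact lt_irrefl _ this
  refine hb ?_ hr2
  rw [Real.dist_eq, abs_lt]
  constructor <;> linarith

lemma aux_tau_meas {ξ η : Measure ℝ} {F : ℝ → ℝ} (hFc : Continuous F)
    (hE : ∀ s t, s < t → (ξ (Set.Icc s t) = η (Set.Icc s t) ↔ F t = F s)) :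
    Measurable (tauE ξ η) := by
  apply measurable_of_Iio
  intro x
  have : tauE ξ η ⁻¹' Set.Iio x =
      ⋃ q ∈ {q : ℚ | ((q : ℝ) : EReal) < x}, {s | ∃ t ∈ Set.Ioc s (q : ℝ), F t = F s} := by
    ext s
    simp only [Set.mem_preimage, Set.mem_Iio, Set.mem_iUnion, Set.mem_ofPred_eq, exists_prop]
    rw [aux_tau_lt hE]
    constructor
    · rintro ⟨t, h1, h2, h3⟩
      obtain ⟨q, hq1, hq2⟩ := EReal.lt_iff_exists_rat_btwn.1 h3
      exact ⟨q, hq2, t, ⟨h1, by exact_mod_cast hq1.le⟩, h2⟩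
    · rintro ⟨q, hq, t, ht, h⟩
      exact ⟨t, ht.1, h, lt_of_le_of_lt (by exact_mod_cast ht.2) hq⟩
  rw [this]
  exact MeasurableSet.biUnion (Set.to_countable _) fun q _ => aux_meas hFc q

lemma aux_ivt {F : ℝ → ℝ} (hFc : Continuous F) {s b : ℝ}
    (h : ∀ t ∈ Set.Ioc s b, F t ≠ F s) :
    (∀ t ∈ Set.Ioc s b, F s < F t) ∨ (∀ t ∈ Set.Ioc s b, F t < F s) := by
  by_contra hcon
  push Not at hcon
  obtain ⟨⟨t, ht, h1⟩, ⟨r, hr, h2⟩⟩ := hcon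
  obtain ⟨x, hx, hx'⟩ := (isPreconnected_Ioc (a := s) (b := b)).intermediate_value ht hr
    hFc.continuousOn (show F s ∈ Set.Icc (F t) (F r) from ⟨h1, h2⟩)
  exact h x hx hx'

lemma aux_main {ξ η : Measure ℝ}
    [IsLocallyFiniteMeasure ξ] [IsLocallyFiniteMeasure η]
    (hξd : ∀ x : ℝ, ξ {x} = 0) (hηd : ∀ x : ℝ, η {x} = 0)
    (hsing : ξ.MutuallySingular η) {F : ℝ → ℝ} (hFc : Continuous F) (hF0 : F 0 = 0)
    (hF : ∀ u v, u ≤ v → F v - F u = (ξ (Set.Ioc u v)).toReal - (η (Set.Ioc u v)).toReal)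
    (hE : ∀ s t, s < t → (ξ (Set.Icc s t) = η (Set.Icc s t) ↔ F t = F s))
    {b : ℝ} (hb : 0 ≤ b) (hpos : ∀ t ∈ Set.Icc 0 b, 0 ≤ F t) :
    ξ (tauE ξ η ⁻¹' Set.Icc ((0:ℝ) : EReal) (b : EReal)) = η (Set.Icc 0 b) := by
  have : NullSingletonClass ξ := ⟨hξd⟩
  have : NullSingletonClass η := ⟨hηd⟩
  set S := tauE ξ η ⁻¹' Set.Icc ((0:ℝ) : EReal) (b : EReal) with hS
  set R := Set.Icc 0 b ∩ {s | ∃ t ∈ Set.Ioc s b, F t = F s} with hR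
  have hRS : R ⊆ S := by
    rintro s ⟨hs, t, ht, h⟩
    refine ⟨le_trans (by exact_mod_cast hs.1) (aux_tau_ge s), ?_⟩
    unfold tauE
    have hle : (t : EReal) ≤ b := by exact_mod_cast ht.2
    exact le_trans (sInf_le ⟨t, ht.1, (hE s t ht.1).2 h, rfl⟩) hle
  have hZ : ∀ n : ℕ, ξ {s | s ∈ Set.Icc (-(n:ℝ)) 0 ∧ ∀ t ∈ Set.Ioc s 0, F t < F s} = 0 := fun n =>
    aux_null hξd hηd hsing hFc hF (by simp)
  have hZ0 : ξ {s | s < 0 ∧ tauE ξ η s = ((0:ℝ) : EReal)} = 0 := by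
    apply Set.Subsingleton.measure_zero
    have : ∀ s t : ℝ, s < t → t < 0 → tauE ξ η s = ((0:ℝ) : EReal) →
        tauE ξ η t = ((0:ℝ) : EReal) → False := by
      intro s t hst ht h1 h2
      have e1 := aux_tau_att hFc hE (hst.trans ht) h1
      have e2 := aux_tau_att hFc hE ht h2
      have : tauE ξ η s < ((0:ℝ) : EReal) :=
        (aux_tau_lt hE s _).2 ⟨t, hst, by rw [← e1, e2], by exact_mod_cast ht⟩
      rw [h1] at this
      exact lt_irrefl _ this
    rintro s ⟨hs, hs'⟩ t ⟨ht, ht'⟩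
    rcases lt_trichotomy s t with h | h | h
    · exact (this s t h ht hs' ht').elim
    · exact h
    · exact (this t s h hs ht' hs').elim
  have hSR : ξ (S \ R) = 0 := by
    have hsub : S \ R ⊆ {b} ∪ ({s | s < 0 ∧ tauE ξ η s = ((0:ℝ) : EReal)} ∪
        ⋃ n : ℕ, {s | s ∈ Set.Icc (-(n:ℝ)) 0 ∧ ∀ t ∈ Set.Ioc s 0, F t < F s}) := by
      rintro s ⟨⟨hs1, hs2⟩, hsR⟩
      have hle := aux_tau_ge (ξ := ξ) (η := η) s
      rcases lt_or_ge s 0 with hs | hs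
      · right
        rcases hs1.eq_or_lt with h0 | h0
        · exact Or.inl ⟨hs, h0.symm⟩
        · right
          obtain ⟨n, hn⟩ := exists_nat_ge (-s)
          refine Set.mem_iUnion.2 ⟨n, ⟨by linarith, hs.le⟩, ?_⟩
          -- tau is a real number t > 0
          have hno : ∀ r, s < r → (r : EReal) < tauE ξ η s → F r ≠ F s := by
            intro r hr1 hr2 hr3
            exact lt_irrefl _ ((aux_tau_lt hE s _).2 ⟨r, hr1, hr3, hr2⟩)
          have hne : ∀ t ∈ Set.Ioc s 0, F t ≠ F s := fun t ht =>
            hno t ht.1 (lt_of_le_of_lt (by exact_mod_cast ht.2) h0)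
          rcases aux_ivt hFc hne with h | h
          · exfalso
            have hs0 : F s < 0 := by rw [← hF0]; exact h 0 ⟨hs, le_rfl⟩
            obtain ⟨t, ht⟩ : ∃ t : ℝ, tauE ξ η s = (t : EReal) := by
              refine ⟨(tauE ξ η s).toReal, (EReal.coe_toReal ?_ ?_).symm⟩
              · exact (lt_of_le_of_lt hs2 (EReal.coe_lt_top b)).ne
              · exact (lt_of_lt_of_le (EReal.bot_lt_coe 0) hs1).ne'
            rw [ht] at h0 hs2
            have h0' : 0 < t := by exact_mod_cast h0
            have hs2' : t ≤ b := by exact_mod_cast hs2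
            have := aux_tau_att hFc hE (hs.trans h0') ht
            linarith [hpos t ⟨h0'.le, hs2'⟩]
          · exact h
      · left
        have hsb : s ≤ b := by exact_mod_cast hle.trans hs2
        by_contra hne
        have hlt : s < b := lt_of_le_of_ne hsb hne
        apply hsR
        refine ⟨⟨hs, hsb⟩, ?_⟩
        rcases hs2.eq_or_lt with h | h
        · exact ⟨b, ⟨hlt, le_rfl⟩, aux_tau_att hFc hE hlt h⟩
        · obtain ⟨t, h1, h2, h3⟩ := (aux_tau_lt hE s _).1 h
          exact ⟨t, ⟨h1, by exact_mod_cast h3.le⟩, h2⟩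
    exact measure_mono_null hsub (measure_union_null (hξd b) (measure_union_null hZ0
      (measure_iUnion_null hZ)))
  have hSeq : ξ S = ξ R := by
    apply le_antisymm _ (measure_mono hRS)
    calc ξ S ≤ ξ (R ∪ S \ R) := measure_mono (by intro s hs; by_cases h : s ∈ R <;> simp [h, hs])
      _ ≤ ξ R + ξ (S \ R) := measure_union_le _ _
      _ = ξ R := by rw [hSR, add_zero]
  obtain ⟨-, hcore⟩ := aux_core hξd hηd hsing hFc hF hb (by rw [hF0]; exact hpos)
  have hnull := aux_null hξd hηd hsing hFc hF hb
  have hcompl : ξ (Set.Icc 0 b \ {s | ∃ t ∈ Set.Ioc s b, F t = F s})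
      = ENNReal.ofReal (F b - F 0) := by
    rw [← hcore]
    apply le_antisymm
    · calc _ ≤ ξ ({s | s ∈ Set.Icc 0 b ∧ ∀ t ∈ Set.Ioc s b, F s < F t} ∪
            {s | s ∈ Set.Icc 0 b ∧ ∀ t ∈ Set.Ioc s b, F t < F s}) := by
            apply measure_mono
            rintro s ⟨hs, hs'⟩
            rcases aux_ivt hFc (fun t ht h => hs' ⟨t, ht, h⟩) with h | h
            · exact Or.inl ⟨hs, h⟩
            · exact Or.inr ⟨hs, h⟩
        _ ≤ _ := measure_union_le _ _
        _ = _ := by rw [hnull, add_zero]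
    · apply measure_mono
      rintro s ⟨hs, hs'⟩
      exact ⟨hs, fun ⟨t, ht, h⟩ => (hs' t ht).ne' h⟩
  have h1 := measure_inter_add_sdiff (μ := ξ) (Set.Icc 0 b) (aux_meas hFc b)
  rw [hcompl, ← measure_congr Ioc_ae_eq_Icc,
    aux_inc hF hb (by rw [hF0]; exact hpos b ⟨hb, le_rfl⟩)] at h1
  rw [hSeq, ← measure_congr Ioc_ae_eq_Icc]
  exact (ENNReal.add_left_inj ENNReal.ofReal_ne_top).1 h1

/-- if `f ≥ 0` on `(0,a)` then the image of `ξ` under `τ` agrees with `η`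
on `[0,a]`. -/
theorem tau_balances_on_interval (ξ η : Measure ℝ)
    [IsLocallyFiniteMeasure ξ] [IsLocallyFiniteMeasure η]
    (hξd : ∀ x : ℝ, ξ {x} = 0) (hηd : ∀ x : ℝ, η {x} = 0)
    (hsing : ξ.MutuallySingular η)
    (a : ℝ) (ha : 0 < a) (hf : ∀ t ∈ Set.Ioo 0 a, 0 ≤ fdiff ξ η t) :
    ∀ C : Set ℝ, C ⊆ Set.Icc 0 a → MeasurableSet C →
      ξ {s : ℝ | ∃ t ∈ C, tauE ξ η s = (t : EReal)} = η C := by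
  obtain ⟨hFc, hF⟩ := aux_fdiff hξd hηd
  have : NullSingletonClass ξ := ⟨hξd⟩
  have : NullSingletonClass η := ⟨hηd⟩
  have hF0 : fdiff ξ η 0 = 0 := by simp [fdiff, hξd, hηd]
  have hE : ∀ s t, s < t → (ξ (Set.Icc s t) = η (Set.Icc s t) ↔ fdiff ξ η t = fdiff ξ η s) := by
    intro s t hst
    have h := hF s t hst.le
    rw [← measure_congr (Ioc_ae_eq_Icc (μ := ξ)), ← measure_congr (Ioc_ae_eq_Icc (μ := η)),
      ← ENNReal.toReal_eq_toReal_iff' measure_Ioc_lt_top.ne measure_Ioc_lt_top.ne]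
    constructor <;> intro h' <;> linarith
  have hpos : ∀ t ∈ Set.Icc 0 a, 0 ≤ fdiff ξ η t := by
    have hcl : IsClosed {t | 0 ≤ fdiff ξ η t} := isClosed_le continuous_const hFc
    have := closure_minimal (s := Set.Ioo 0 a) (t := {t | 0 ≤ fdiff ξ η t}) hf hcl
    rw [closure_Ioo ha.ne] at this
    exact this
  have hmain : ∀ b ∈ Set.Icc 0 a,
      ξ (tauE ξ η ⁻¹' Set.Icc ((0:ℝ) : EReal) (b : EReal)) = η (Set.Icc 0 b) := fun b hb =>
    aux_main hξd hηd hsing hFc hF0 hF hE hb.1 (fun t ht => hpos t ⟨ht.1, ht.2.trans hb.2⟩)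
  have hτm : Measurable (tauE ξ η) := aux_tau_meas hFc hE
  set S := tauE ξ η ⁻¹' Set.Icc ((0:ℝ) : EReal) (a : EReal) with hS
  have hSm : MeasurableSet S := hτm measurableSet_Icc
  have hτr : Measurable fun s => (tauE ξ η s).toReal := measurable_ereal_toReal.comp hτm
  have hcoe : ∀ s ∈ S, tauE ξ η s = (((tauE ξ η s).toReal : ℝ) : EReal) := by
    intro s hs
    refine (EReal.coe_toReal ?_ ?_).symm
    · exact (lt_of_le_of_lt hs.2 (EReal.coe_lt_top a)).ne
    · exact (lt_of_lt_of_le (EReal.bot_lt_coe 0) hs.1).ne'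
  have heq : (ξ.restrict S).map (fun s => (tauE ξ η s).toReal) = η.restrict (Set.Icc 0 a) := by
    have : IsFiniteMeasure (ξ.restrict S) := ⟨by
      rw [Measure.restrict_apply_univ, hmain a ⟨ha.le, le_rfl⟩]; exact measure_Icc_lt_top⟩
    apply Measure.ext_of_Iic
    intro b
    rw [Measure.map_apply hτr measurableSet_Iic, Measure.restrict_apply (hτr measurableSet_Iic),
      Measure.restrict_apply measurableSet_Iic]
    rcases lt_or_ge b 0 with hb | hb
    · have e1 : (fun s => (tauE ξ η s).toReal) ⁻¹' Set.Iic b ∩ S = ∅ := by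
        ext s
        simp only [Set.mem_inter_iff, Set.mem_preimage, Set.mem_Iic, Set.mem_empty_iff_false,
          iff_false, not_and]
        intro h hs
        have h1 := hs.1
        rw [hcoe s hs] at h1
        have : 0 ≤ (tauE ξ η s).toReal := by exact_mod_cast h1
        linarith
      have e2 : Set.Iic b ∩ Set.Icc 0 a = ∅ := by
        ext s
        simp only [Set.mem_inter_iff, Set.mem_Iic, Set.mem_Icc, Set.mem_empty_iff_false,
          iff_false, not_and]
        intro h hs
        linarith
      rw [e1, e2]; simp
    · have e1 : (fun s => (tauE ξ η s).toReal) ⁻¹' Set.Iic b ∩ S =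
          tauE ξ η ⁻¹' Set.Icc ((0:ℝ) : EReal) ((min b a : ℝ) : EReal) := by
        ext s
        constructor
        · rintro ⟨h, hs⟩
          refine ⟨hs.1, ?_⟩
          have h2 := hs.2
          rw [hcoe s hs] at h2 ⊢
          exact_mod_cast le_min h (by exact_mod_cast h2)
        · intro hs
          have hsS : s ∈ S := ⟨hs.1, hs.2.trans (by exact_mod_cast min_le_right _ _)⟩
          refine ⟨?_, hsS⟩
          have h2 := hs.2
          rw [hcoe s hsS] at h2
          have h3 : (tauE ξ η s).toReal ≤ min b a := by exact_mod_cast h2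
          exact h3.trans (min_le_left _ _)
      have e2 : Set.Iic b ∩ Set.Icc 0 a = Set.Icc 0 (min b a) := by
        ext s
        simp only [Set.mem_inter_iff, Set.mem_Iic, Set.mem_Icc, le_min_iff]
        tauto
      rw [e1, e2]
      exact hmain _ ⟨le_min hb ha.le, min_le_right _ _⟩
  intro C hC hCm
  have h := congrArg (fun μ : Measure ℝ => μ C) heq
  rw [Measure.map_apply hτr hCm, Measure.restrict_apply (hτr hCm),
    Measure.restrict_apply hCm, Set.inter_eq_left.2 hC] at h
  rw [← h]
  congr 1
  ext s
  constructor
  · rintro ⟨t, ht, hts⟩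
    refine ⟨?_, ?_⟩
    · simp only [Set.mem_preimage, hts, EReal.toReal_coe]
      exact ht
    · have := hC ht
      refine ⟨?_, ?_⟩
      · rw [hts]; exact_mod_cast this.1
      · rw [hts]; exact_mod_cast this.2
  · rintro ⟨h1, h2⟩
    exact ⟨_, h1, hcoe s h2⟩
end

section
/- Fix a > 0, suppose f(t) ≥ 0 for all t ∈ (0,a), and let m(t) := min{f(s) : t ≤ s ≤ a} for t ∈ [0,a] be the backwards running minimum of f on [0,a]. Then for every connected component (u, v) of the relatively open set {t ∈ [0,a] : f(t) > m(t)} one has ξ{s ∈ (u,v) : τ(s) ≤ a} = ξ((u,v)) = η((u,v)). -/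
open MeasureTheory

/-- The backwards running minimum `m(t) = min {f(s) : t ≤ s ≤ a}`. -/
noncomputable def runMin (ξ η : Measure ℝ) (a t : ℝ) : ℝ :=
  sInf (fdiff ξ η '' Set.Icc t a)

noncomputable def gPrim (μ : Measure ℝ) (t : ℝ) : ℝ := ∫ _ in (0:ℝ)..t, (1:ℝ) ∂μ

lemma gPrim_int (μ : Measure ℝ) [IsLocallyFiniteMeasure μ] (a b : ℝ) :
    IntervalIntegrable (fun _ : ℝ => (1:ℝ)) μ a b := intervalIntegrable_const

lemma gPrim_cont (μ : Measure ℝ) [IsLocallyFiniteMeasure μ] (h : ∀ x : ℝ, μ {x} = 0) :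
    Continuous (gPrim μ) := by
  have : NullSingletonClass μ := ⟨h⟩
  exact intervalIntegral.continuous_primitive (fun a b => gPrim_int μ a b) 0

lemma gPrim_sub (μ : Measure ℝ) [IsLocallyFiniteMeasure μ] (h : ∀ x : ℝ, μ {x} = 0)
    {s t : ℝ} (hst : s ≤ t) : gPrim μ t - gPrim μ s = (μ (Set.Icc s t)).toReal := by
  have : NullSingletonClass μ := ⟨h⟩
  unfold gPrim
  rw [intervalIntegral.integral_interval_sub_left (gPrim_int _ _ _) (gPrim_int _ _ _),
    intervalIntegral.integral_of_le hst, ← integral_Icc_eq_integral_Ioc]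
  simp [Measure.real]

lemma gPrim_zero (μ : Measure ℝ) : gPrim μ 0 = 0 := by simp [gPrim]

section
variable (ξ η : Measure ℝ) [IsLocallyFiniteMeasure ξ] [IsLocallyFiniteMeasure η]

lemma fdiff_eq (hξd : ∀ x : ℝ, ξ {x} = 0) (hηd : ∀ x : ℝ, η {x} = 0) :
    fdiff ξ η = fun t => gPrim ξ t - gPrim η t := by
  ext t
  unfold fdiff
  split_ifs with h
  · rw [← gPrim_sub ξ hξd h, ← gPrim_sub η hηd h]; simp [gPrim_zero]
  · push Not at h
    rw [← gPrim_sub ξ hξd h.le, ← gPrim_sub η hηd h.le]; simp [gPrim_zero]; ring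

lemma fdiff_cont (hξd : ∀ x : ℝ, ξ {x} = 0) (hηd : ∀ x : ℝ, η {x} = 0) :
    Continuous (fdiff ξ η) := by
  rw [fdiff_eq ξ η hξd hηd]
  exact (gPrim_cont ξ hξd).sub (gPrim_cont η hηd)

lemma fdiff_sub (hξd : ∀ x : ℝ, ξ {x} = 0) (hηd : ∀ x : ℝ, η {x} = 0) {s t : ℝ} (hst : s ≤ t) :
    fdiff ξ η t - fdiff ξ η s = (ξ (Set.Icc s t)).toReal - (η (Set.Icc s t)).toReal := by
  rw [fdiff_eq ξ η hξd hηd, ← gPrim_sub ξ hξd hst, ← gPrim_sub η hηd hst]; ring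

lemma fdiff_eq_iff (hξd : ∀ x : ℝ, ξ {x} = 0) (hηd : ∀ x : ℝ, η {x} = 0) {s t : ℝ} (hst : s ≤ t) :
    fdiff ξ η t = fdiff ξ η s ↔ ξ (Set.Icc s t) = η (Set.Icc s t) := by
  rw [← sub_eq_zero, fdiff_sub ξ η hξd hηd hst, sub_eq_zero,
    ENNReal.toReal_eq_toReal_iff' isCompact_Icc.measure_lt_top.ne isCompact_Icc.measure_lt_top.ne]

lemma fdiff_le_iff (hξd : ∀ x : ℝ, ξ {x} = 0) (hηd : ∀ x : ℝ, η {x} = 0) {s t : ℝ} (hst : s ≤ t) :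
    fdiff ξ η t ≤ fdiff ξ η s ↔ ξ (Set.Icc s t) ≤ η (Set.Icc s t) := by
  rw [← sub_nonpos, fdiff_sub ξ η hξd hηd hst, sub_nonpos,
    ENNReal.toReal_le_toReal isCompact_Icc.measure_lt_top.ne isCompact_Icc.measure_lt_top.ne]

lemma runMin_lt_iff (hξd : ∀ x : ℝ, ξ {x} = 0) (hηd : ∀ x : ℝ, η {x} = 0) {a t : ℝ} (hst : t ≤ a) :
    runMin ξ η a t < fdiff ξ η t ↔ ∃ s ∈ Set.Icc t a, fdiff ξ η s < fdiff ξ η t := by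
  have hb : BddBelow (fdiff ξ η '' Set.Icc t a) :=
    (isCompact_Icc.image (fdiff_cont ξ η hξd hηd)).bddBelow
  constructor
  · intro h
    obtain ⟨_, ⟨s, hs, rfl⟩, h2⟩ := exists_lt_of_csInf_lt
      ((Set.nonempty_Icc.2 hst).image (fdiff ξ η)) h
    exact ⟨s, hs, h2⟩
  · rintro ⟨s, hs, h⟩
    exact lt_of_le_of_lt (csInf_le hb (Set.mem_image_of_mem _ hs)) h

/-- one interval -/
lemma interval_bound (hξd : ∀ x : ℝ, ξ {x} = 0) (hηd : ∀ x : ℝ, η {x} = 0) (a : ℝ) (A J : Set ℝ)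
    (hA : ∀ s ∈ A, ∀ t ∈ Set.Icc s a, fdiff ξ η t ≤ fdiff ξ η s)
    (hJ : J.OrdConnected) (hJa : J ⊆ Set.Ioo 0 a) : ξ (A ∩ J) ≤ η J := by
  rcases (A ∩ J).eq_empty_or_nonempty with h0 | hne
  · simp [h0]
  have : NullSingletonClass η := ⟨hηd⟩
  have hJne : J.Nonempty := hne.mono Set.inter_subset_right
  have hbb : BddBelow J := bddBelow_Ioo.mono hJa
  have hba : BddAbove J := bddAbove_Ioo.mono hJa
  have hbAJ : BddBelow (A ∩ J) := hbb.mono Set.inter_subset_right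
  set q := sSup J with hq
  set p := sInf (A ∩ J) with hp
  have hqa : q ≤ a := csSup_le hJne fun x hx => (hJa hx).2.le
  have hsub : A ∩ J ⊆ Set.Icc p q := fun x hx => ⟨csInf_le hbAJ hx, le_csSup hba hx.2⟩
  have hpq : p ≤ q := by
    obtain ⟨x, hx⟩ := hne
    exact (hsub hx).1.trans (hsub hx).2
  have hcl : IsClosed {s | fdiff ξ η q ≤ fdiff ξ η s} :=
    isClosed_le continuous_const (fdiff_cont ξ η hξd hηd)
  have hmem : p ∈ {s | fdiff ξ η q ≤ fdiff ξ η s} := by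
    refine closure_minimal ?_ hcl (csInf_mem_closure hne hbAJ)
    intro s hs
    exact hA s hs.1 q ⟨(hsub hs).2, hqa⟩
  have hIoo : Set.Ioo p q ⊆ J := by
    intro y hy
    obtain ⟨s, hs, hsy⟩ := exists_lt_of_csInf_lt hne hy.1
    obtain ⟨t, ht, hyt⟩ := exists_lt_of_lt_csSup hJne hy.2
    exact hJ.out hs.2 ht ⟨hsy.le, hyt.le⟩
  calc ξ (A ∩ J) ≤ ξ (Set.Icc p q) := measure_mono hsub
    _ ≤ η (Set.Icc p q) := (fdiff_le_iff ξ η hξd hηd hpq).1 hmem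
    _ = η (Set.Ioo p q) := (measure_congr Ioo_ae_eq_Icc).symm
    _ ≤ η J := measure_mono hIoo

lemma open_bound (hξd : ∀ x : ℝ, ξ {x} = 0) (hηd : ∀ x : ℝ, η {x} = 0) (a : ℝ) (A U : Set ℝ)
    (hA : ∀ s ∈ A, ∀ t ∈ Set.Icc s a, fdiff ξ η t ≤ fdiff ξ η s)
    (hU : IsOpen U) (hUa : U ⊆ Set.Ioo 0 a) : ξ (A ∩ U) ≤ η U := by
  set C : Set (Set ℝ) := (fun x => connectedComponentIn U x) '' U with hC
  have hUC : U = ⋃ J ∈ C, J := by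
    apply Set.Subset.antisymm
    · intro x hx
      exact Set.mem_biUnion (Set.mem_image_of_mem _ hx) (mem_connectedComponentIn hx)
    · refine Set.iUnion₂_subset ?_
      rintro _ ⟨x, hx, rfl⟩
      exact connectedComponentIn_subset U x
  have hop : ∀ J ∈ C, IsOpen J := by
    rintro _ ⟨x, hx, rfl⟩
    exact hU.connectedComponentIn
  have hdis : C.PairwiseDisjoint id := by
    rintro _ ⟨x, hx, rfl⟩ _ ⟨y, hy, rfl⟩ hne
    simp only [Function.onFun, id]
    by_contra hnd
    obtain ⟨z, hz1, hz2⟩ := Set.not_disjoint_iff.1 hnd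
    exact hne ((connectedComponentIn_eq hz1).trans (connectedComponentIn_eq hz2).symm)
  have hcount : C.Countable := by
    refine hdis.countable_of_isOpen hop ?_
    rintro _ ⟨x, hx, rfl⟩
    exact ⟨x, mem_connectedComponentIn hx⟩
  have hη : η U = ∑' J : C, η J := by
    conv_lhs => rw [hUC]
    exact measure_biUnion hcount hdis fun J hJ => (hop J hJ).measurableSet
  have hAU : A ∩ U ⊆ ⋃ J ∈ C, A ∩ J := by
    intro x hx
    exact Set.mem_biUnion (Set.mem_image_of_mem _ hx.2) ⟨hx.1, mem_connectedComponentIn hx.2⟩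
  rw [hη]
  refine (measure_mono hAU).trans ((measure_biUnion_le ξ hcount _).trans ?_)
  refine ENNReal.tsum_le_tsum ?_
  rintro ⟨_, ⟨x, hx, rfl⟩⟩
  refine interval_bound ξ η hξd hηd a A _ hA isPreconnected_connectedComponentIn.ordConnected ?_
  exact (connectedComponentIn_subset U x).trans hUa

lemma null_of_decr (hξd : ∀ x : ℝ, ξ {x} = 0) (hηd : ∀ x : ℝ, η {x} = 0)
    (hsing : ξ.MutuallySingular η) (a : ℝ) (A : Set ℝ)
    (hA : ∀ s ∈ A, ∀ t ∈ Set.Icc s a, fdiff ξ η t ≤ fdiff ξ η s)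
    (hAa : A ⊆ Set.Ioo 0 a) : ξ A = 0 := by
  obtain ⟨S, -, hS1, hS2⟩ := hsing
  have key : ξ (A ∩ Sᶜ) = 0 := by
    have h0 : η (A ∩ Sᶜ) = 0 := measure_mono_null Set.inter_subset_right hS2
    refine le_antisymm (le_of_forall_gt fun r hr => ?_) zero_le
    obtain ⟨U, hU1, hU2, hU3⟩ := (A ∩ Sᶜ).exists_isOpen_lt_of_lt (μ := η) r (by rwa [h0])
    calc ξ (A ∩ Sᶜ) ≤ ξ (A ∩ (U ∩ Set.Ioo 0 a)) :=
          measure_mono fun x hx => ⟨hx.1, hU1 hx, hAa hx.1⟩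
      _ ≤ η (U ∩ Set.Ioo 0 a) := open_bound ξ η hξd hηd a A _ hA (hU2.inter isOpen_Ioo)
          Set.inter_subset_right
      _ ≤ η U := measure_mono Set.inter_subset_left
      _ < r := hU3
  refine measure_mono_null (t := (A ∩ Sᶜ) ∪ S) ?_ (measure_union_null key hS1)
  intro x hx
  by_cases h : x ∈ S
  · exact Or.inr h
  · exact Or.inl ⟨hx, h⟩

end

/-- for every connected component `(u,v)` of `{t ∈ [0,a] : f(t) > m(t)}` one has
`ξ{s ∈ (u,v) : τ(s) ≤ a} = ξ((u,v)) = η((u,v))`. -/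
theorem excursion_balance (ξ η : Measure ℝ)
    [IsLocallyFiniteMeasure ξ] [IsLocallyFiniteMeasure η]
    (hξd : ∀ x : ℝ, ξ {x} = 0) (hηd : ∀ x : ℝ, η {x} = 0)
    (hsing : ξ.MutuallySingular η)
    (a : ℝ) (ha : 0 < a) (hf : ∀ t ∈ Set.Ioo 0 a, 0 ≤ fdiff ξ η t)
    (u v : ℝ)
    (hcomp : ∃ x ∈ {t ∈ Set.Icc 0 a | runMin ξ η a t < fdiff ξ η t},
      connectedComponentIn {t ∈ Set.Icc 0 a | runMin ξ η a t < fdiff ξ η t} x = Set.Ioo u v) :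
    ξ {s ∈ Set.Ioo u v | tauE ξ η s ≤ (a : EReal)} = ξ (Set.Ioo u v) ∧
      ξ (Set.Ioo u v) = η (Set.Ioo u v) := by
  obtain ⟨x, hxE, hcc⟩ := hcomp
  have hfc := fdiff_cont ξ η hξd hηd
  set f := fdiff ξ η with hfdef
  set E := {t ∈ Set.Icc 0 a | runMin ξ η a t < f t} with hE
  have hEmem : ∀ t, t ∈ E ↔ t ∈ Set.Icc 0 a ∧ ∃ s ∈ Set.Icc t a, f s < f t := by
    intro t
    constructor
    · rintro ⟨h1, h2⟩
      exact ⟨h1, (runMin_lt_iff ξ η hξd hηd h1.2).1 h2⟩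
    · rintro ⟨h1, h2⟩
      exact ⟨h1, (runMin_lt_iff ξ η hξd hηd h1.2).2 h2⟩
  have hxuv : x ∈ Set.Ioo u v := hcc ▸ mem_connectedComponentIn hxE
  have huv : u < v := hxuv.1.trans hxuv.2
  have hsubE : Set.Ioo u v ⊆ E := hcc ▸ connectedComponentIn_subset E x
  have hIcc : Set.Icc u v ⊆ Set.Icc 0 a := by
    rw [← closure_Ioo huv.ne]
    exact closure_minimal (fun y hy => (hsubE hy).1) isClosed_Icc
  have huI : u ∈ Set.Icc 0 a := hIcc ⟨le_rfl, huv.le⟩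
  have hvI : v ∈ Set.Icc 0 a := hIcc ⟨huv.le, le_rfl⟩
  have huE : u ∉ E := by
    intro h
    have h1 : Set.Ico u v ⊆ E := by
      intro y hy
      rcases hy.1.eq_or_lt with rfl | h2
      · exact h
      · exact hsubE ⟨h2, hy.2⟩
    have h2 := isPreconnected_Ico.subset_connectedComponentIn (⟨hxuv.1.le, hxuv.2⟩ : x ∈ Set.Ico u v) h1
    rw [hcc] at h2
    exact lt_irrefl _ (h2 ⟨le_rfl, huv⟩).1
  have hvE : v ∉ E := by
    intro h
    have h1 : Set.Ioc u v ⊆ E := by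
      intro y hy
      rcases hy.2.eq_or_lt with rfl | h2
      · exact h
      · exact hsubE ⟨hy.1, h2⟩
    have h2 := isPreconnected_Ioc.subset_connectedComponentIn (⟨hxuv.1, hxuv.2.le⟩ : x ∈ Set.Ioc u v) h1
    rw [hcc] at h2
    exact lt_irrefl _ (h2 ⟨huv, le_rfl⟩).2
  have hu : ∀ t ∈ Set.Icc u a, f u ≤ f t := by
    intro t ht
    by_contra hh
    exact huE ((hEmem u).2 ⟨huI, t, ht, not_le.1 hh⟩)
  have hv : ∀ t ∈ Set.Icc v a, f v ≤ f t := by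
    intro t ht
    by_contra hh
    exact hvE ((hEmem v).2 ⟨hvI, t, ht, not_le.1 hh⟩)
  have hfuv : f v = f u := by
    refine le_antisymm ?_ (hu v ⟨huv.le, hvI.2⟩)
    by_contra hlt
    push Not at hlt
    obtain ⟨c, hc1, hc2⟩ := exists_between hlt
    have hK : IsCompact (Set.Icc u v ∩ {s | f s ≤ c}) :=
      isCompact_Icc.inter_right (isClosed_le hfc continuous_const)
    obtain ⟨s, ⟨hs1, hs2⟩, hs3⟩ := hK.exists_isGreatest ⟨u, ⟨le_rfl, huv.le⟩, hc1.le⟩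
    have hs2' : f s ≤ c := hs2
    have hsc : f s = c := by
      obtain ⟨y, hy, hyc⟩ := intermediate_value_Icc hs1.2 hfc.continuousOn
        (⟨hs2', hc2.le⟩ : c ∈ Set.Icc (f s) (f v))
      have : y ≤ s := hs3 ⟨⟨hs1.1.trans hy.1, hy.2⟩, hyc.le⟩
      rw [← hyc, le_antisymm this hy.1]
    have hsu : u < s := lt_of_le_of_ne hs1.1 (by rintro rfl; linarith)
    have hsv : s < v := lt_of_le_of_ne hs1.2 (by rintro rfl; linarith)
    obtain ⟨-, w, hw, hwl⟩ := (hEmem s).1 (hsubE ⟨hsu, hsv⟩)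
    rcases le_total w v with h | h
    · have : w ≤ s := hs3 ⟨⟨hs1.1.trans hw.1, h⟩, (hwl.trans_eq hsc).le⟩
      rw [le_antisymm this hw.1] at hwl
      exact lt_irrefl _ hwl
    · have := hv w ⟨h, hw.2⟩
      linarith
  constructor
  · set B := {s ∈ Set.Ioo u v | tauE ξ η s ≤ (a : EReal)} with hB
    have hnull : ξ (Set.Ioo u v \ B) = 0 := by
      refine null_of_decr ξ η hξd hηd hsing a _ ?_ ?_
      · rintro s ⟨hs, hsB⟩ t ht
        have hne : ∀ y, s < y → y ≤ a → f y ≠ f s := by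
          intro y hy hya hfy
          refine hsB ⟨hs, ?_⟩
          refine le_trans (b := (y : EReal)) (sInf_le ⟨y, hy, (fdiff_eq_iff ξ η hξd hηd hy.le).1 hfy, rfl⟩) ?_
          exact_mod_cast hya
        obtain ⟨-, w, hw, hwl⟩ := (hEmem s).1 (hsubE hs)
        have hsw : s < w := lt_of_le_of_ne hw.1 (by rintro rfl; exact lt_irrefl _ hwl)
        by_contra hlt
        push Not at hlt
        have hst : s < t := lt_of_le_of_ne ht.1 (by rintro rfl; exact lt_irrefl _ hlt)
        obtain ⟨y, hy, hyf⟩ := intermediate_value_uIcc (a := w) (b := t) hfc.continuousOn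
          (Set.mem_uIcc_of_le hwl.le hlt.le : f s ∈ Set.uIcc (f w) (f t))
        exact hne y ((lt_min hsw hst).trans_le hy.1) (hy.2.trans (max_le hw.2 ht.2)) hyf
      · rintro s ⟨hs, -⟩
        exact ⟨huI.1.trans_lt hs.1, hs.2.trans_le hvI.2⟩
    refine le_antisymm (measure_mono (Set.sep_subset _ _)) ?_
    calc ξ (Set.Ioo u v) ≤ ξ (B ∪ (Set.Ioo u v \ B)) :=
          measure_mono (by intro y hy; by_cases h : y ∈ B; exacts [Or.inl h, Or.inr ⟨hy, h⟩])
      _ ≤ ξ B + ξ (Set.Ioo u v \ B) := measure_union_le _ _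
      _ = ξ B := by rw [hnull, add_zero]
  · have : NullSingletonClass ξ := ⟨hξd⟩
    have : NullSingletonClass η := ⟨hηd⟩
    rw [measure_congr (Ioo_ae_eq_Icc (μ := ξ)), measure_congr (Ioo_ae_eq_Icc (μ := η))]
    exact (fdiff_eq_iff ξ η hξd hηd huv.le).1 hfuv
end

section
/- Fix a > 0, suppose f(t) ≥ 0 for all t ∈ (0,a), let m(t) := min{f(s) : t ≤ s ≤ a} for t ∈ [0,a], and set C := {t ∈ [0,a] : f(t) = m(t)}. Then ξ{s ∈ C : τ(s) ≤ a} = η(C) = 0. -/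
open MeasureTheory

theorem rb_interval (μ ν : Measure ℝ) (hμd : ∀ x : ℝ, μ {x} = 0) (A I : Set ℝ)
    (hbA : BddAbove A) (hbB : BddBelow A) (hI : I.OrdConnected)
    (h : ∀ s ∈ A, ∀ t ∈ A, s < t → μ (Set.Icc s t) ≤ ν (Set.Icc s t)) :
    μ (A ∩ I) ≤ ν I := by
  rcases (A ∩ I).eq_empty_or_nonempty with he | hne
  · simp [he]
  have hb1 : BddBelow (A ∩ I) := hbB.mono Set.inter_subset_left
  have hb2 : BddAbove (A ∩ I) := hbA.mono Set.inter_subset_left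
  obtain ⟨u, hu, hut, hum⟩ := exists_seq_tendsto_sInf hne hb1
  obtain ⟨v, hv, hvt, hvm⟩ := exists_seq_tendsto_sSup hne hb2
  have hsub : A ∩ I ⊆ ({sInf (A ∩ I)} ∪ {sSup (A ∩ I)}) ∪ ⋃ n, Set.Icc (u n) (v n) := by
    intro x hx
    by_cases h1 : x = sInf (A ∩ I)
    · left; left; exact h1
    by_cases h2 : x = sSup (A ∩ I)
    · left; right; exact h2
    right
    have h1' : sInf (A ∩ I) < x := lt_of_le_of_ne (csInf_le hb1 hx) (Ne.symm h1)
    have h2' : x < sSup (A ∩ I) := lt_of_le_of_ne (le_csSup hb2 hx) h2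
    obtain ⟨n, hn1, hn2⟩ := ((hut.eventually_lt_const h1').and (hvt.eventually_const_lt h2')).exists
    exact Set.mem_iUnion.2 ⟨n, hn1.le, hn2.le⟩
  have hmono : Monotone fun n => Set.Icc (u n) (v n) := fun m n hmn =>
    Set.Icc_subset_Icc (hu hmn) (hv hmn)
  calc μ (A ∩ I) ≤ μ (({sInf (A ∩ I)} ∪ {sSup (A ∩ I)}) ∪ ⋃ n, Set.Icc (u n) (v n)) :=
        measure_mono hsub
    _ ≤ μ ({sInf (A ∩ I)} ∪ {sSup (A ∩ I)}) + μ (⋃ n, Set.Icc (u n) (v n)) := measure_union_le _ _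
    _ = μ (⋃ n, Set.Icc (u n) (v n)) := by
        rw [measure_union_null (hμd _) (hμd _), zero_add]
    _ = ⨆ n, μ (Set.Icc (u n) (v n)) := hmono.measure_iUnion
    _ ≤ ν I := by
        refine iSup_le fun n => ?_
        rcases lt_trichotomy (u n) (v n) with hlt | heq | hgt
        · exact (h _ (hum n).1 _ (hvm n).1 hlt).trans
            (measure_mono (hI.out (hum n).2 (hvm n).2))
        · rw [heq, Set.Icc_self, hμd]; exact zero_le
        · rw [Set.Icc_eq_empty (not_le.2 hgt)]; simp

theorem rb_open (μ ν : Measure ℝ) (hμd : ∀ x : ℝ, μ {x} = 0) (A U : Set ℝ)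
    (hbA : BddAbove A) (hbB : BddBelow A) (hU : IsOpen U)
    (h : ∀ s ∈ A, ∀ t ∈ A, s < t → μ (Set.Icc s t) ≤ ν (Set.Icc s t)) :
    μ (A ∩ U) ≤ ν U := by
  let S : Set (Set ℝ) := (fun x => connectedComponentIn U x) '' U
  have hSo : ∀ I ∈ S, IsOpen I := by
    rintro _ ⟨x, -, rfl⟩; exact hU.connectedComponentIn
  have hSn : ∀ I ∈ S, I.Nonempty := by
    rintro _ ⟨x, hx, rfl⟩; exact ⟨x, mem_connectedComponentIn hx⟩
  have hSc : ∀ I ∈ S, I.OrdConnected := by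
    rintro _ ⟨x, -, rfl⟩; exact isPreconnected_connectedComponentIn.ordConnected
  have hSd : S.PairwiseDisjoint id := by
    rintro _ ⟨x, hx, rfl⟩ _ ⟨y, hy, rfl⟩ hne
    refine Set.disjoint_left.2 fun z hz1 hz2 => hne ?_
    exact (connectedComponentIn_eq hz1).trans (connectedComponentIn_eq hz2).symm
  have hcount : S.Countable := hSd.countable_of_isOpen hSo hSn
  have hUS : U = ⋃ I ∈ S, I := by
    apply Set.Subset.antisymm
    · intro x hx
      exact Set.mem_biUnion (Set.mem_image_of_mem _ hx) (mem_connectedComponentIn hx)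
    · refine Set.iUnion₂_subset ?_
      rintro _ ⟨x, -, rfl⟩
      exact connectedComponentIn_subset _ _
  have hsub : A ∩ U ⊆ ⋃ I ∈ S, A ∩ I := by
    rintro x ⟨hxA, hxU⟩
    exact Set.mem_biUnion (Set.mem_image_of_mem _ hxU) ⟨hxA, mem_connectedComponentIn hxU⟩
  calc μ (A ∩ U) ≤ μ (⋃ I ∈ S, A ∩ I) := measure_mono hsub
    _ ≤ ∑' I : S, μ (A ∩ I) := measure_biUnion_le _ hcount _
    _ ≤ ∑' I : S, ν I :=
        ENNReal.tsum_le_tsum fun I => rb_interval μ ν hμd A I hbA hbB (hSc _ I.2) h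
    _ = ν (⋃ I ∈ S, I) :=
        (measure_biUnion hcount hSd fun I hI => (hSo I hI).measurableSet).symm
    _ = ν U := by rw [← hUS]

theorem rb_null (μ ν : Measure ℝ) [IsLocallyFiniteMeasure ν] (hμd : ∀ x : ℝ, μ {x} = 0)
    (hs : μ.MutuallySingular ν) (A : Set ℝ)
    (hbA : BddAbove A) (hbB : BddBelow A)
    (h : ∀ s ∈ A, ∀ t ∈ A, s < t → μ (Set.Icc s t) ≤ ν (Set.Icc s t)) :
    μ A = 0 := by
  obtain ⟨N, -, hN1, hN2⟩ := hs
  refine le_antisymm (le_of_forall_gt fun ε hε => ?_) zero_le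
  obtain ⟨U, hNU, hUo, hU⟩ := Set.exists_isOpen_lt_of_lt (μ := ν) Nᶜ ε (by rwa [hN2])
  have hsub : A ⊆ N ∪ (A ∩ U) := by
    intro x hx
    by_cases hxN : x ∈ N
    · exact Or.inl hxN
    · exact Or.inr ⟨hx, hNU hxN⟩
  calc μ A ≤ μ (N ∪ (A ∩ U)) := measure_mono hsub
    _ ≤ μ N + μ (A ∩ U) := measure_union_le _ _
    _ = μ (A ∩ U) := by rw [hN1, zero_add]
    _ ≤ ν U := rb_open μ ν hμd A U hbA hbB hUo h
    _ < ε := hU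

theorem rb_add (μ : Measure ℝ) [IsLocallyFiniteMeasure μ] (hμd : ∀ x : ℝ, μ {x} = 0)
    {r s t : ℝ} (h1 : r ≤ s) (h2 : s ≤ t) :
    (μ (Set.Icc r t)).toReal = (μ (Set.Icc r s)).toReal + (μ (Set.Icc s t)).toReal := by
  rw [← ENNReal.toReal_add measure_Icc_lt_top.ne measure_Icc_lt_top.ne]
  congr 1
  have : NullSingletonClass μ := ⟨hμd⟩
  rw [← Set.Icc_union_Ioc_eq_Icc h1 h2, measure_union _ measurableSet_Ioc,
    measure_congr (Ioc_ae_eq_Icc (a := s) (b := t))]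
  rw [Set.disjoint_left]
  intro x hx hx'
  exact absurd hx.2 (not_le.2 hx'.1)

theorem rb_fdiff (ξ η : Measure ℝ)
    [IsLocallyFiniteMeasure ξ] [IsLocallyFiniteMeasure η]
    (hξd : ∀ x : ℝ, ξ {x} = 0) (hηd : ∀ x : ℝ, η {x} = 0) {s t : ℝ} (h0 : 0 ≤ s) (h : s ≤ t) :
    fdiff ξ η t - fdiff ξ η s = (ξ (Set.Icc s t)).toReal - (η (Set.Icc s t)).toReal := by
  unfold fdiff
  rw [if_pos h0, if_pos (h0.trans h), rb_add ξ hξd h0 h, rb_add η hηd h0 h]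
  ring

theorem rb_le_of_mem (ξ η : Measure ℝ)
    [IsLocallyFiniteMeasure ξ] [IsLocallyFiniteMeasure η] {a s t : ℝ} (hs : 0 ≤ s)
    (hm : fdiff ξ η s = runMin ξ η a s) (hst : s ≤ t) (hta : t ≤ a) :
    fdiff ξ η s ≤ fdiff ξ η t := by
  rw [hm]
  refine csInf_le ⟨-(η (Set.Icc 0 a)).toReal, ?_⟩ ⟨t, ⟨hst, hta⟩, rfl⟩
  rintro _ ⟨x, ⟨hx1, hx2⟩, rfl⟩
  unfold fdiff
  rw [if_pos (hs.trans hx1)]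
  have h1 : (η (Set.Icc 0 x)).toReal ≤ (η (Set.Icc 0 a)).toReal :=
    ENNReal.toReal_mono measure_Icc_lt_top.ne (measure_mono (Set.Icc_subset_Icc_right hx2))
  have h2 : 0 ≤ (ξ (Set.Icc 0 x)).toReal := ENNReal.toReal_nonneg
  linarith

theorem rb_hit (ξ η : Measure ℝ)
    [IsLocallyFiniteMeasure ξ] [IsLocallyFiniteMeasure η]
    (hξd : ∀ x : ℝ, ξ {x} = 0) (hηd : ∀ x : ℝ, η {x} = 0) {a s : ℝ} (h0 : 0 ≤ s) (h : s < a)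
    (hτ : tauE ξ η s ≤ (a : EReal)) :
    ∃ t, s < t ∧ t ≤ a ∧ fdiff ξ η t = fdiff ξ η s := by
  by_contra! hcon
  have key : ∀ t, s < t → ξ (Set.Icc s t) = η (Set.Icc s t) → a < t := by
    intro t hst ht
    by_contra! hta
    refine hcon t hst hta ?_
    have := rb_fdiff ξ η hξd hηd h0 hst.le
    rw [ht] at this
    linarith
  refine hcon a h le_rfl ?_
  have hfa := rb_fdiff ξ η hξd hηd h0 h.le
  have i1 : NullSingletonClass ξ := ⟨hξd⟩
  have i2 : NullSingletonClass η := ⟨hηd⟩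
  suffices H : ∀ ε : ℝ, 0 < ε → |fdiff ξ η a - fdiff ξ η s| ≤ ε by
    have : |fdiff ξ η a - fdiff ξ η s| ≤ 0 := le_of_forall_pos_le_add (by simpa using H)
    have := abs_nonpos_iff.1 this
    linarith
  intro ε hε
  have hε' : (0 : ENNReal) < ENNReal.ofReal ε := ENNReal.ofReal_pos.2 hε
  have e1 := (tendsto_measure_Icc ξ a).eventually_lt_const hε'
  have e2 := (tendsto_measure_Icc η a).eventually_lt_const hε'
  obtain ⟨δ, hδ, hδ'⟩ := Metric.eventually_nhds_iff.1 (e1.and e2)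
  obtain ⟨d1, d2⟩ := hδ' (y := δ / 2) (by
    rw [Real.dist_eq, sub_zero, abs_of_pos (by linarith)]; linarith)
  have hlt : tauE ξ η s < ((a + δ / 2 : ℝ) : EReal) :=
    lt_of_le_of_lt hτ (EReal.coe_lt_coe_iff.2 (by linarith))
  obtain ⟨_, ⟨t, hst, ht, rfl⟩, htl⟩ := sInf_lt_iff.1 hlt
  have htl' : t < a + δ / 2 := EReal.coe_lt_coe_iff.1 htl
  have hat := key t hst ht
  have q1 := rb_add ξ hξd h.le hat.le
  have q2 := rb_add η hηd h.le hat.le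
  have hsub : Set.Icc a t ⊆ Set.Icc (a - δ / 2) (a + δ / 2) :=
    Set.Icc_subset_Icc (by linarith) htl'.le
  have r1 : (ξ (Set.Icc a t)).toReal ≤ ε :=
    ENNReal.toReal_le_of_le_ofReal hε.le ((measure_mono hsub).trans d1.le)
  have r2 : (η (Set.Icc a t)).toReal ≤ ε :=
    ENNReal.toReal_le_of_le_ofReal hε.le ((measure_mono hsub).trans d2.le)
  have p1 : 0 ≤ (ξ (Set.Icc a t)).toReal := ENNReal.toReal_nonneg
  have p2 : 0 ≤ (η (Set.Icc a t)).toReal := ENNReal.toReal_nonneg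
  rw [ht] at q1
  rw [hfa, abs_le]
  constructor <;> linarith

/-- with `C = {t ∈ [0,a] : f(t) = m(t)}` one has
`ξ{s ∈ C : τ(s) ≤ a} = η(C) = 0`. -/
theorem rest_balance (ξ η : Measure ℝ)
    [IsLocallyFiniteMeasure ξ] [IsLocallyFiniteMeasure η]
    (hξd : ∀ x : ℝ, ξ {x} = 0) (hηd : ∀ x : ℝ, η {x} = 0)
    (hsing : ξ.MutuallySingular η)
    (a : ℝ) (ha : 0 < a) (hf : ∀ t ∈ Set.Ioo 0 a, 0 ≤ fdiff ξ η t) :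
    ξ {s ∈ {t ∈ Set.Icc 0 a | fdiff ξ η t = runMin ξ η a t} | tauE ξ η s ≤ (a : EReal)}
        = η {t ∈ Set.Icc 0 a | fdiff ξ η t = runMin ξ η a t} ∧
      η {t ∈ Set.Icc 0 a | fdiff ξ η t = runMin ξ η a t} = 0 := by
  have hη : η {t ∈ Set.Icc 0 a | fdiff ξ η t = runMin ξ η a t} = 0 := by
    refine rb_null η ξ hηd hsing.symm _ ⟨a, fun x hx => hx.1.2⟩ ⟨0, fun x hx => hx.1.1⟩ ?_
    rintro s ⟨⟨hs0, hsa⟩, hs⟩ t ⟨⟨ht0, hta⟩, ht⟩ hst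
    have h1 := rb_le_of_mem ξ η hs0 hs hst.le hta
    have h2 := rb_fdiff ξ η hξd hηd hs0 hst.le
    refine (ENNReal.toReal_le_toReal measure_Icc_lt_top.ne measure_Icc_lt_top.ne).1 ?_
    linarith
  refine ⟨?_, hη⟩
  rw [hη]
  let D : ℚ → Set ℝ := fun r => {s | (0 ≤ s ∧ s ≤ a) ∧ fdiff ξ η s = runMin ξ η a s ∧ s < r ∧
    ∃ t, (r : ℝ) ≤ t ∧ t ≤ a ∧ fdiff ξ η t = fdiff ξ η s}
  have hD : ∀ r, ξ (D r) = 0 := by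
    intro r
    refine rb_null ξ η hξd hsing _ ⟨a, fun x hx => hx.1.2⟩ ⟨0, fun x hx => hx.1.1⟩ ?_
    rintro s ⟨⟨hs0, hsa⟩, hs, hsr, u, hru, hua, hu⟩ t ⟨⟨ht0, hta⟩, ht, htr, -⟩ hst
    have h1 := rb_le_of_mem ξ η ht0 ht (htr.le.trans hru) hua
    have h2 := rb_fdiff ξ η hξd hηd hs0 hst.le
    refine (ENNReal.toReal_le_toReal measure_Icc_lt_top.ne measure_Icc_lt_top.ne).1 ?_
    linarith
  refine measure_mono_null (t := {a} ∪ ⋃ r, D r) ?_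
    (measure_union_null (hξd a) (measure_iUnion_null hD))
  rintro s ⟨⟨⟨hs0, hsa⟩, hs⟩, hτ⟩
  rcases hsa.eq_or_lt with he | hlt
  · exact Or.inl he
  · obtain ⟨t, hst, hta, hft⟩ := rb_hit ξ η hξd hηd hs0 hlt hτ
    obtain ⟨r, hr1, hr2⟩ := exists_rat_btwn hst
    exact Or.inr (Set.mem_iUnion.2 ⟨r, ⟨hs0, hsa⟩, hs, hr1, t, hr2.le, hta, hft⟩)
end

section
/- Let ξ be a diffuse (atomless) locally finite Borel measure on ℝ with ξ((−∞,0)) = ξ((0,∞)) = ∞. For r ≥ 0 define τ^r(s) := sup{t ≥ s : ξ([s,t]) = r}. Then for all real a < b, ξ{s ∈ ℝ : a ≤ τ^r(s) < b} = ξ([a,b]); that is, the image of ξ under τ^r equals ξ. -/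
open MeasureTheory

/-- `τʳ(s) = sup {t ≥ s : ξ[s,t] = r}` (a real supremum). -/
noncomputable def tauSup (ξ : Measure ℝ) (r s : ℝ) : ℝ :=
  sSup {t : ℝ | s ≤ t ∧ ξ (Set.Icc s t) = ENNReal.ofReal r}

theorem tauAux_exists_prim (ξ : Measure ℝ) [IsLocallyFiniteMeasure ξ]
    (hξd : ∀ x : ℝ, ξ {x} = 0)
    (hleft : ξ (Set.Iio 0) = ⊤) (hright : ξ (Set.Ioi 0) = ⊤) :
    ∃ G : ℝ → ℝ, Continuous G ∧ Monotone G ∧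
      (∀ x y, x ≤ y → ξ (Set.Ico x y) = ENNReal.ofReal (G y - G x)) ∧
      (∀ x y, x ≤ y → ξ (Set.Icc x y) = ENNReal.ofReal (G y - G x)) ∧
      (∀ M, ∃ x, M < G x) ∧ (∀ M, ∃ x, G x < M) := by
  have : NullSingletonClass ξ := ⟨hξd⟩
  have hint : ∀ a b : ℝ, IntervalIntegrable (fun _ => (1:ℝ)) ξ a b := fun a b =>
    intervalIntegrable_const
  have hsub : ∀ x y : ℝ, x ≤ y →
      (∫ _ in (0:ℝ)..y, (1:ℝ) ∂ξ) - (∫ _ in (0:ℝ)..x, (1:ℝ) ∂ξ) = (ξ (Set.Icc x y)).toReal := by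
    intro x y h
    rw [intervalIntegral.integral_interval_sub_left (hint _ _) (hint _ _),
      intervalIntegral.integral_of_le h]
    simp [Measure.real, measure_congr (Ioc_ae_eq_Icc (μ := ξ) (a := x) (b := y))]
  have hIcc : ∀ x y : ℝ, x ≤ y → ξ (Set.Icc x y) = ENNReal.ofReal
      ((∫ _ in (0:ℝ)..y, (1:ℝ) ∂ξ) - (∫ _ in (0:ℝ)..x, (1:ℝ) ∂ξ)) := by
    intro x y h
    rw [hsub x y h, ENNReal.ofReal_toReal isCompact_Icc.measure_lt_top.ne]
  refine ⟨fun x => ∫ _ in (0:ℝ)..x, (1:ℝ) ∂ξ,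
    intervalIntegral.continuous_primitive hint 0, ?_, ?_, hIcc, ?_, ?_⟩
  · intro x y h
    have := hsub x y h
    have h2 : 0 ≤ (ξ (Set.Icc x y)).toReal := ENNReal.toReal_nonneg
    simp only
    linarith
  · intro x y h
    rw [← hIcc x y h]
    exact measure_congr Ico_ae_eq_Icc
  · intro M
    by_contra! hM
    have hU : Set.Ioi (0:ℝ) ⊆ ⋃ n : ℕ, Set.Icc (0:ℝ) n := by
      intro x hx
      obtain ⟨n, hn⟩ := exists_nat_ge x
      exact Set.mem_iUnion.2 ⟨n, le_of_lt hx, hn⟩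
    have hm : Monotone (fun n : ℕ => Set.Icc (0:ℝ) n) := by
      intro m n h
      exact Set.Icc_subset_Icc le_rfl (by exact_mod_cast h)
    have h1 := measure_mono (μ := ξ) hU
    rw [hright, hm.measure_iUnion, top_le_iff] at h1
    have h2 : (⨆ n : ℕ, ξ (Set.Icc (0:ℝ) n)) ≤ ENNReal.ofReal M := by
      refine iSup_le fun n => ?_
      rw [hIcc 0 n (by positivity)]
      apply ENNReal.ofReal_le_ofReal
      simpa using hM n
    rw [h1] at h2
    exact absurd h2 (by simp)
  · intro M
    by_contra! hM
    have hU : Set.Iio (0:ℝ) ⊆ ⋃ n : ℕ, Set.Icc (-(n:ℝ)) 0 := by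
      intro x hx
      obtain ⟨n, hn⟩ := exists_nat_ge (-x)
      exact Set.mem_iUnion.2 ⟨n, by linarith, le_of_lt hx⟩
    have hm : Monotone (fun n : ℕ => Set.Icc (-(n:ℝ)) 0) := by
      intro m n h
      exact Set.Icc_subset_Icc (neg_le_neg (by exact_mod_cast h)) le_rfl
    have h1 := measure_mono (μ := ξ) hU
    rw [hleft, hm.measure_iUnion, top_le_iff] at h1
    have h2 : (⨆ n : ℕ, ξ (Set.Icc (-(n:ℝ)) 0)) ≤ ENNReal.ofReal (-M) := by
      refine iSup_le fun n => ?_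
      rw [hIcc (-n) 0 (by simp)]
      apply ENNReal.ofReal_le_ofReal
      simpa using hM (-n)
    rw [h1] at h2
    exact absurd h2 (by simp)

/-- for a diffuse locally finite measure `ξ` on `ℝ` with infinite mass on both
half-lines and `r ≥ 0`, `ξ{s : a ≤ τʳ(s) < b} = ξ([a,b])` for all `a < b`; that is, the image
of `ξ` under `τʳ` equals `ξ`. -/
theorem tauSup_balances (ξ : Measure ℝ) [IsLocallyFiniteMeasure ξ]
    (hξd : ∀ x : ℝ, ξ {x} = 0)
    (hleft : ξ (Set.Iio 0) = ⊤) (hright : ξ (Set.Ioi 0) = ⊤)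
    (r : ℝ) (hr : 0 ≤ r) :
    ∀ a b : ℝ, a < b →
      ξ {s : ℝ | a ≤ tauSup ξ r s ∧ tauSup ξ r s < b} = ξ (Set.Icc a b) := by
  intro a b hab
  obtain ⟨G, hc, hmono, hIco, hIcc, htop, hbot⟩ := tauAux_exists_prim ξ hξd hleft hright
  have ivt : ∀ v, ∃ x, G x = v := by
    intro v
    obtain ⟨x, hx⟩ := hbot v
    obtain ⟨y, hy⟩ := htop v
    exact mem_range_of_exists_le_of_exists_ge hc ⟨x, hx.le⟩ ⟨y, hy.le⟩
  have hset : ∀ s, {t : ℝ | s ≤ t ∧ ξ (Set.Icc s t) = ENNReal.ofReal r}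
      = {t : ℝ | s ≤ t ∧ G t = G s + r} := by
    intro s
    ext t
    simp only [Set.mem_ofPred_eq]
    refine and_congr_right fun h => ?_
    rw [hIcc s t h, ENNReal.ofReal_eq_ofReal_iff (sub_nonneg.2 (hmono h)) hr]
    constructor <;> intro h <;> linarith
  have hgr : ∀ s, IsGreatest {t : ℝ | s ≤ t ∧ G t = G s + r} (tauSup ξ r s) := by
    intro s
    rw [tauSup, hset s]
    have hcl : IsClosed {t : ℝ | s ≤ t ∧ G t = G s + r} :=
      (isClosed_le continuous_const continuous_id).inter (isClosed_eq hc continuous_const)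
    have hne : {t : ℝ | s ≤ t ∧ G t = G s + r}.Nonempty := by
      obtain ⟨x, hx⟩ := ivt (G s + r)
      rcases le_total s x with h | h
      · exact ⟨x, h, hx⟩
      · exact ⟨s, le_rfl, by have := hmono h; linarith⟩
    have hbd : BddAbove {t : ℝ | s ≤ t ∧ G t = G s + r} := by
      obtain ⟨y, hy⟩ := htop (G s + r)
      exact ⟨y, fun t ht => (hmono.reflect_lt (by rw [ht.2]; exact hy)).le⟩
    exact ⟨hcl.csSup_mem hne hbd, fun t ht => le_csSup hbd ht⟩
  have hlt : ∀ s c, tauSup ξ r s < c ↔ G s < G c - r := by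
    intro s c
    obtain ⟨⟨h1, h2⟩, h3⟩ := hgr s
    constructor
    · intro h
      have h4 := hmono h.le
      by_contra! h5
      exact absurd (h3 ⟨h1.trans h.le, by linarith⟩) (not_le.2 h)
    · intro h
      exact hmono.reflect_lt (by linarith)
  have hmin : ∀ v, ∃ c, G c = v ∧ ∀ s, G s < v ↔ s < c := by
    intro v
    have hcl : IsClosed {t : ℝ | v ≤ G t} := isClosed_le continuous_const hc
    obtain ⟨x, hx⟩ := ivt v
    obtain ⟨y, hy⟩ := hbot v
    have hbd : BddBelow {t : ℝ | v ≤ G t} :=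
      ⟨y, fun t ht => (hmono.reflect_lt (lt_of_lt_of_le hy ht)).le⟩
    have hmem : v ≤ G (sInf {t : ℝ | v ≤ G t}) := hcl.csInf_mem ⟨x, hx.ge⟩ hbd
    refine ⟨sInf {t : ℝ | v ≤ G t}, le_antisymm ?_ hmem, fun s => ⟨fun h => ?_, fun h => ?_⟩⟩
    · rw [← hx]
      exact hmono (csInf_le (hx ▸ hbd) (by simp))
    · exact hmono.reflect_lt (h.trans_le hmem)
    · by_contra! h2
      exact absurd (csInf_le hbd h2) (not_le.2 h)
  obtain ⟨c, hc1, hc2⟩ := hmin (G a - r)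
  obtain ⟨d, hd1, hd2⟩ := hmin (G b - r)
  have hS : {s : ℝ | a ≤ tauSup ξ r s ∧ tauSup ξ r s < b} = Set.Ico c d := by
    ext s
    simp only [Set.mem_ofPred_eq, Set.mem_Ico]
    rw [hlt, hd2, ← not_lt, hlt, hc2, not_lt]
  have hcd : c ≤ d := by
    by_contra! h
    have := (hc2 d).2 h
    have := hmono hab.le
    linarith
  rw [hS, hIco c d hcd, hIcc a b hab.le, hc1, hd1]
  congr 1
  ring
end

section
/- Assume that for every r ∈ ℝ the image measure of Q under the map ω ↦ θ_{S_r(ω)}(ω) equals Q. Fix w > 0 and define the measure Q* on Ω by ∫ f dQ* = w^{−1} ∫_Ω ∫_0^{S_w(ω)} f(θ_s ω) ds Q(dω) for nonnegative measurable f. Then (i) Q* is invariant under every θ_t, t ∈ ℝ, and (ii) Q is the Palm measure of ξ with respect to Q*: for every nonnegative measurable f, ∫_Ω ∫_ℝ 1_{[0,1]}(s) f(θ_s ω) ξ(ω, ds) Q*(dω) = ∫_Ω f dQ. -/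
open MeasureTheory ProbabilityTheory
open scoped ENNReal

/-- The generalised inverse `S_r` of the diffuse random measure `ξ`:
`S_r(ω) = sup {t ≥ 0 : ξ(ω,[0,t]) = r}` for `r ≥ 0` and
`S_r(ω) = sup {t < 0 : ξ(ω,[t,0]) = −r}` for `r < 0`. -/
noncomputable def Sr {Ω : Type*} [MeasurableSpace Ω] (ξ : Kernel Ω ℝ) (r : ℝ) (ω : Ω) : ℝ :=
  if 0 ≤ r then sSup {t : ℝ | 0 ≤ t ∧ ξ ω (Set.Icc 0 t) = ENNReal.ofReal r}
  else sSup {t : ℝ | t < 0 ∧ ξ ω (Set.Icc t 0) = ENNReal.ofReal (-r)}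

namespace MSP

/-- signed distribution function -/
noncomputable def F {Ω : Type*} [MeasurableSpace Ω] (ξ : Kernel Ω ℝ) (ω : Ω) (t : ℝ) : ℝ :=
  (ξ ω (Set.Ico 0 t)).toReal - (ξ ω (Set.Ico t 0)).toReal

section Fsec
variable {Ω : Type*} [MeasurableSpace Ω] {ξ : Kernel Ω ℝ}
    (hdiffuse : ∀ (ω : Ω) (x : ℝ), ξ ω {x} = 0)
    (hlf : ∀ (ω : Ω) (K : Set ℝ), IsCompact K → ξ ω K < ⊤)

include hlf in
lemma ico_lt (ω : Ω) (a b : ℝ) : ξ ω (Set.Ico a b) < ⊤ :=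
  lt_of_le_of_lt (measure_mono Set.Ico_subset_Icc_self) (hlf ω _ isCompact_Icc)

include hlf in
lemma ico_add (ω : Ω) {a b c : ℝ} (h : a ≤ b) (h' : b ≤ c) :
    (ξ ω (Set.Ico a c)).toReal = (ξ ω (Set.Ico a b)).toReal + (ξ ω (Set.Ico b c)).toReal := by
  rw [← Set.Ico_union_Ico_eq_Ico h h', measure_union _ measurableSet_Ico,
    ENNReal.toReal_add (ico_lt hlf _ _ _).ne (ico_lt hlf _ _ _).ne]
  rw [Set.disjoint_left]
  intro x hx hx'
  exact absurd hx.2 (not_lt.2 hx'.1)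

include hlf in
lemma F_sub (ω : Ω) {a b : ℝ} (h : a ≤ b) :
    F ξ ω b - F ξ ω a = (ξ ω (Set.Ico a b)).toReal := by
  unfold F
  rcases le_total 0 a with ha | ha
  · rw [ico_add hlf ω ha h, Set.Ico_eq_empty (not_lt.2 ha), Set.Ico_eq_empty (not_lt.2 (ha.trans h))]
    simp
  · rcases le_total 0 b with hb | hb
    · rw [ico_add hlf ω ha hb, Set.Ico_eq_empty (not_lt.2 ha), Set.Ico_eq_empty (not_lt.2 hb)]
      simp; ring
    · rw [ico_add hlf ω h hb, Set.Ico_eq_empty (not_lt.2 ha), Set.Ico_eq_empty (not_lt.2 hb)]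
      simp

include hlf in
lemma F_mono (ω : Ω) : Monotone (F ξ ω) := by
  intro a b h
  have := F_sub hlf ω h
  have h2 : 0 ≤ (ξ ω (Set.Ico a b)).toReal := ENNReal.toReal_nonneg
  linarith

lemma F_zero (ω : Ω) : F ξ ω 0 = 0 := by simp [F]

include hlf in
lemma ico_eq (ω : Ω) {a b : ℝ} (h : a ≤ b) :
    ξ ω (Set.Ico a b) = ENNReal.ofReal (F ξ ω b - F ξ ω a) := by
  rw [F_sub hlf ω h, ENNReal.ofReal_toReal (ico_lt hlf _ _ _).ne]

include hdiffuse in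
lemma icc_eq_ico (ω : Ω) (a b : ℝ) : ξ ω (Set.Icc a b) = ξ ω (Set.Ico a b) := by
  have : NullSingletonClass (ξ ω) := ⟨hdiffuse ω⟩
  exact (measure_congr Ico_ae_eq_Icc).symm

include hdiffuse hlf in
lemma F_cont (ω : Ω) : Continuous (F ξ ω) := by
  have : NullSingletonClass (ξ ω) := ⟨hdiffuse ω⟩
  have : IsLocallyFiniteMeasure (ξ ω) := by
    refine ⟨fun x => ⟨Set.Icc (x-1) (x+1), Icc_mem_nhds (by linarith) (by linarith), hlf ω _ isCompact_Icc⟩⟩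
  have h : F ξ ω = fun x => ∫ y in (0:ℝ)..x, (1:ℝ) ∂(ξ ω) := by
    ext x
    rw [intervalIntegral.integral_const', F]
    simp only [Measure.real, smul_eq_mul, mul_one]
    congr 2
    · exact measure_congr Ico_ae_eq_Ioc
    · exact measure_congr Ico_ae_eq_Ioc
  rw [h]
  refine intervalIntegral.continuous_primitive (fun a b => ?_) 0
  exact intervalIntegrable_const

include hdiffuse hlf in
lemma F_meas : Measurable (fun p : Ω × ℝ => F ξ p.1 p.2) := by
  have h : Measurable (Function.uncurry (fun (t : ℝ) (ω : Ω) => F ξ ω t)) := by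
    refine measurable_uncurry_of_continuous_of_measurable (fun ω => F_cont hdiffuse hlf ω) (fun t => ?_)
    unfold F
    exact ((ξ.measurable_coe measurableSet_Ico).ennreal_toReal).sub
      ((ξ.measurable_coe measurableSet_Ico).ennreal_toReal)
  exact h.comp measurable_swap

include hlf in
lemma F_shift {θ : ℝ → Ω → Ω} (hequiv : ∀ (t : ℝ) (C : Set ℝ), MeasurableSet C →
      ∀ ω : Ω, ξ (θ t ω) {x : ℝ | x + t ∈ C} = ξ ω C) (s t : ℝ) (ω : Ω) :
    F ξ (θ s ω) t = F ξ ω (t + s) - F ξ ω s := by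
  have key : ∀ a b, ξ (θ s ω) (Set.Ico a b) = ξ ω (Set.Ico (a+s) (b+s)) := by
    intro a b
    rw [← hequiv s _ measurableSet_Ico ω]
    congr 1
    ext x; simp
  rw [F, key, key, zero_add]
  rcases le_total 0 t with h | h
  · rw [F_sub hlf ω (by linarith), Set.Ico_eq_empty (a := t+s) (by simpa using h)]; simp
  · have := F_sub hlf ω (a := t+s) (b := s) (by linarith)
    rw [← this, Set.Ico_eq_empty (a := s) (by simpa using h)]; simp

end Fsec

lemma sup_char {f : ℝ → ℝ} (hm : Monotone f) (hc : Continuous f) {r : ℝ} {A : Set ℝ}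
    (hA : ∀ a ∈ A, f a = r) (hne : A.Nonempty) (hup : ∀ a ∈ A, ∀ t, a ≤ t → f t = r → t ∈ A)
    (hb : ∃ t, r < f t) (t : ℝ) : sSup A < t ↔ r < f t := by
  have hle : ∀ t, r < f t → ∀ a ∈ A, a ≤ t := by
    intro t ht a ha
    by_contra! hlt
    have := hm hlt.le
    rw [hA a ha] at this
    linarith
  have hbdd : BddAbove A := by
    obtain ⟨t, ht⟩ := hb
    exact ⟨t, fun a ha => hle t ht a ha⟩
  obtain ⟨a, ha⟩ := hne
  constructor
  · intro h
    by_contra! h2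
    have hat : a ≤ t := (le_csSup hbdd ha).trans h.le
    have h3 : f t = r := le_antisymm h2 (by rw [← hA a ha]; exact hm hat)
    exact absurd (le_csSup hbdd (hup a ha t hat h3)) (not_le.2 h)
  · intro h
    have h1 : ∀ᶠ x in nhdsWithin t (Set.Iio t), r < f x :=
      (hc.continuousAt.eventually (lt_mem_nhds h)).filter_mono nhdsWithin_le_nhds
    obtain ⟨x, hx, hxt⟩ := (h1.and self_mem_nhdsWithin).exists
    exact lt_of_le_of_lt (csSup_le ⟨a, ha⟩ (hle x hx)) hxt

/-- good set -/
def G {Ω : Type*} [MeasurableSpace Ω] (ξ : Kernel Ω ℝ) : Set Ω :=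
  {ω | (∀ r, ∃ t, r < F ξ ω t) ∧ (∀ r, ∃ t, F ξ ω t < r)}

open Classical in
/-- modified inverse -/
noncomputable def S {Ω : Type*} [MeasurableSpace Ω] (ξ : Kernel Ω ℝ) (r : ℝ) (ω : Ω) : ℝ :=
  if ω ∈ G ξ then Sr ξ r ω else 0

section Gsec
variable {Ω : Type*} [MeasurableSpace Ω] {ξ : Kernel Ω ℝ}
    (hdiffuse : ∀ (ω : Ω) (x : ℝ), ξ ω {x} = 0)
    (hlf : ∀ (ω : Ω) (K : Set ℝ), IsCompact K → ξ ω K < ⊤)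

include hdiffuse hlf in
lemma S_iff {ω : Ω} (hω : ω ∈ G ξ) (r t : ℝ) : S ξ r ω < t ↔ r < F ξ ω t := by
  have hm := F_mono hlf ω
  have hc := F_cont hdiffuse hlf ω
  obtain ⟨x, hx⟩ : ∃ x, F ξ ω x = r := by
    obtain ⟨a, ha⟩ := hω.1 r
    obtain ⟨b, hb⟩ := hω.2 r
    exact mem_range_of_exists_le_of_exists_ge hc ⟨b, hb.le⟩ ⟨a, ha.le⟩
  rw [S, if_pos hω, Sr]
  split_ifs with hr
  · have h1 : ∀ t, 0 ≤ t → (ξ ω (Set.Icc 0 t) = ENNReal.ofReal r ↔ F ξ ω t = r) := by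
      intro t ht
      have h0 : F ξ ω 0 ≤ F ξ ω t := hm ht
      rw [F_zero] at h0
      rw [icc_eq_ico hdiffuse, ico_eq hlf ω ht, F_zero, sub_zero, ENNReal.ofReal_eq_ofReal_iff h0 hr]
    refine sup_char hm hc ?_ ?_ ?_ (hω.1 r) t
    · rintro a ⟨ha, h⟩
      exact (h1 a ha).1 h
    · rcases le_total 0 x with h | h
      · exact ⟨x, h, (h1 x h).2 hx⟩
      · refine ⟨0, le_rfl, (h1 0 le_rfl).2 ?_⟩
        have := hm h
        rw [F_zero] at *
        linarith
    · rintro a ⟨ha, h⟩ t hat ht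
      exact ⟨ha.trans hat, (h1 t (ha.trans hat)).2 ht⟩
  · push Not at hr
    have h1 : ∀ t, t < 0 → (ξ ω (Set.Icc t 0) = ENNReal.ofReal (-r) ↔ F ξ ω t = r) := by
      intro t ht
      have h0 : F ξ ω t ≤ F ξ ω 0 := hm ht.le
      rw [F_zero] at h0
      rw [icc_eq_ico hdiffuse, ico_eq hlf ω ht.le, F_zero, zero_sub,
        ENNReal.ofReal_eq_ofReal_iff (by linarith) (by linarith), neg_inj]
    have h2 : ∀ t, F ξ ω t = r → t < 0 := by
      intro t ht
      by_contra! h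
      have := hm h
      rw [F_zero] at this
      linarith
    refine sup_char hm hc ?_ ?_ ?_ (hω.1 r) t
    · rintro a ⟨ha, h⟩
      exact (h1 a ha).1 h
    · exact ⟨x, h2 x hx, (h1 x (h2 x hx)).2 hx⟩
    · rintro a ⟨ha, h⟩ t hat ht
      exact ⟨h2 t ht, (h1 t (h2 t ht)).2 ht⟩

include hlf in
lemma G_eq : G ξ = {ω | (∀ n : ℕ, ∃ m : ℕ, (n:ℝ) < F ξ ω m) ∧
    (∀ n : ℕ, ∃ m : ℕ, F ξ ω (-(m:ℝ)) < -(n:ℝ))} := by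
  ext ω
  have hm := F_mono hlf ω
  constructor
  · rintro ⟨h1, h2⟩
    refine ⟨fun n => ?_, fun n => ?_⟩
    · obtain ⟨t, ht⟩ := h1 n
      obtain ⟨m, hmt⟩ := exists_nat_ge t
      exact ⟨m, ht.trans_le (hm hmt)⟩
    · obtain ⟨t, ht⟩ := h2 (-n)
      obtain ⟨m, hmt⟩ := exists_nat_ge (-t)
      exact ⟨m, (hm (by linarith)).trans_lt ht⟩
  · rintro ⟨h1, h2⟩
    refine ⟨fun r => ?_, fun r => ?_⟩
    · obtain ⟨n, hn⟩ := exists_nat_ge r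
      obtain ⟨m, h⟩ := h1 n
      exact ⟨m, hn.trans_lt h⟩
    · obtain ⟨n, hn⟩ := exists_nat_ge (-r)
      obtain ⟨m, h⟩ := h2 n
      exact ⟨_, h.trans_le (by linarith)⟩

include hdiffuse hlf in
lemma G_meas : MeasurableSet (G ξ) := by
  have hF : ∀ t, Measurable (fun ω => F ξ ω t) := fun t =>
    (F_meas hdiffuse hlf).comp (measurable_id.prodMk measurable_const)
  rw [G_eq hlf]
  have : {ω | (∀ n : ℕ, ∃ m : ℕ, (n:ℝ) < F ξ ω m) ∧
    (∀ n : ℕ, ∃ m : ℕ, F ξ ω (-(m:ℝ)) < -(n:ℝ))} =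
    (⋂ n : ℕ, ⋃ m : ℕ, {ω | (n:ℝ) < F ξ ω m}) ∩
    (⋂ n : ℕ, ⋃ m : ℕ, {ω | F ξ ω (-(m:ℝ)) < -(n:ℝ)}) := by
    ext ω
    simp
  rw [this]
  refine MeasurableSet.inter ?_ ?_
  · exact MeasurableSet.iInter fun n => MeasurableSet.iUnion fun m =>
      measurableSet_lt measurable_const (hF _)
  · exact MeasurableSet.iInter fun n => MeasurableSet.iUnion fun m =>
      measurableSet_lt (hF _) measurable_const

include hdiffuse hlf in
lemma S_meas : Measurable (fun p : ℝ × Ω => S ξ p.1 p.2) := by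
  refine measurable_of_Iio fun t => ?_
  have : (fun p : ℝ × Ω => S ξ p.1 p.2) ⁻¹' Set.Iio t =
      ((Prod.snd ⁻¹' (G ξ)) ∩ {p : ℝ × Ω | p.1 < F ξ p.2 t}) ∪
      ((Prod.snd ⁻¹' (G ξ))ᶜ ∩ {p : ℝ × Ω | (0:ℝ) < t}) := by
    ext p
    by_cases h : p.2 ∈ G ξ
    · simp [h, S_iff hdiffuse hlf h]
    · simp [h, S]
  rw [this]
  have hG : MeasurableSet ((Prod.snd : ℝ × Ω → Ω) ⁻¹' (G ξ)) := measurable_snd (G_meas hdiffuse hlf)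
  refine (hG.inter ?_).union (hG.compl.inter (MeasurableSet.const _))
  exact measurableSet_lt measurable_fst ((F_meas hdiffuse hlf).comp (measurable_snd.prodMk measurable_const))

include hdiffuse hlf in
lemma F_S {ω : Ω} (hω : ω ∈ G ξ) (r : ℝ) : F ξ ω (S ξ r ω) = r := by
  apply le_antisymm
  · by_contra! h
    exact lt_irrefl _ ((S_iff hdiffuse hlf hω _ _).2 h)
  · have h1 : Filter.Tendsto (F ξ ω) (nhdsWithin (S ξ r ω) (Set.Ioi (S ξ r ω)))
        (nhds (F ξ ω (S ξ r ω))) :=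
      (F_cont hdiffuse hlf ω).continuousAt.mono_left nhdsWithin_le_nhds
    refine ge_of_tendsto h1 ?_
    filter_upwards [self_mem_nhdsWithin] with t ht
    exact ((S_iff hdiffuse hlf hω _ _).1 ht).le

include hlf in
lemma G_shift {θ : ℝ → Ω → Ω} (hequiv : ∀ (t : ℝ) (C : Set ℝ), MeasurableSet C →
      ∀ ω : Ω, ξ (θ t ω) {x : ℝ | x + t ∈ C} = ξ ω C) (s : ℝ) {ω : Ω} (hω : ω ∈ G ξ) :
    θ s ω ∈ G ξ := by
  refine ⟨fun r => ?_, fun r => ?_⟩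
  · obtain ⟨t, ht⟩ := hω.1 (r + F ξ ω s)
    refine ⟨t - s, ?_⟩
    rw [F_shift hlf hequiv, sub_add_cancel]; linarith
  · obtain ⟨t, ht⟩ := hω.2 (r + F ξ ω s)
    refine ⟨t - s, ?_⟩
    rw [F_shift hlf hequiv, sub_add_cancel]; linarith

include hdiffuse hlf in
lemma S_shift {θ : ℝ → Ω → Ω} (hequiv : ∀ (t : ℝ) (C : Set ℝ), MeasurableSet C →
      ∀ ω : Ω, ξ (θ t ω) {x : ℝ | x + t ∈ C} = ξ ω C) (r s : ℝ) {ω : Ω} (hω : ω ∈ G ξ) :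
    S ξ r (θ s ω) = S ξ (r + F ξ ω s) ω - s := by
  refine eq_of_forall_gt_iff fun t => ?_
  rw [S_iff hdiffuse hlf (G_shift hlf hequiv s hω), F_shift hlf hequiv, sub_lt_iff_lt_add,
    S_iff hdiffuse hlf hω, lt_sub_iff_add_lt]

include hdiffuse hlf in
lemma map_S {ω : Ω} (hω : ω ∈ G ξ) : Measure.map (fun r => S ξ r ω) volume = ξ ω := by
  have hSm : Measurable (fun r => S ξ r ω) := (S_meas hdiffuse hlf).comp measurable_prodMk_right
  have : IsLocallyFiniteMeasure (ξ ω) := by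
    refine ⟨fun x => ⟨Set.Icc (x-1) (x+1), Icc_mem_nhds (by linarith) (by linarith), hlf ω _ isCompact_Icc⟩⟩
  symm
  refine Measure.ext_of_Ico _ _ fun a b hab => ?_
  rw [Measure.map_apply hSm measurableSet_Ico, ico_eq hlf ω hab.le]
  have : (fun r => S ξ r ω) ⁻¹' Set.Ico a b = Set.Ico (F ξ ω a) (F ξ ω b) := by
    ext r
    simp only [Set.mem_preimage, Set.mem_Ico, S_iff hdiffuse hlf hω]
    rw [← not_lt, S_iff hdiffuse hlf hω, not_lt]
  rw [this, Real.volume_Ico]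

include hlf in
lemma G_ae {Q : Measure Ω}
    (hQleft : Q {ω | ξ ω (Set.Iio 0) < ⊤} = 0)
    (hQright : Q {ω | ξ ω (Set.Ioi 0) < ⊤} = 0) : ∀ᵐ ω ∂Q, ω ∈ G ξ := by
  have h1 : ∀ᵐ ω ∂Q, ¬ ξ ω (Set.Iio 0) < ⊤ := by rw [ae_iff]; simpa only [not_not] using hQleft
  have h2 : ∀ᵐ ω ∂Q, ¬ ξ ω (Set.Ioi 0) < ⊤ := by rw [ae_iff]; simpa only [not_not] using hQright
  filter_upwards [h1, h2] with ω h1 h2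
  refine ⟨fun r => ?_, fun r => ?_⟩
  · by_contra! h
    apply h2
    have hsub : Set.Ioi (0:ℝ) ⊆ ⋃ n : ℕ, Set.Ico (0:ℝ) n := by
      intro x hx
      obtain ⟨n, hn⟩ := exists_nat_gt x
      exact Set.mem_iUnion.2 ⟨n, le_of_lt hx, hn⟩
    refine lt_of_le_of_lt (measure_mono hsub) ?_
    have hmono : Monotone (fun n : ℕ => Set.Ico (0:ℝ) n) := fun m n hmn =>
      Set.Ico_subset_Ico_right (by exact_mod_cast hmn)
    rw [hmono.measure_iUnion]
    refine lt_of_le_of_lt (iSup_le fun n => ?_) (ENNReal.ofReal_lt_top (r := r))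
    rw [ico_eq hlf ω (Nat.cast_nonneg n), F_zero, sub_zero]
    exact ENNReal.ofReal_le_ofReal (h n)
  · by_contra! h
    apply h1
    have hsub : Set.Iio (0:ℝ) ⊆ ⋃ n : ℕ, Set.Ico (-(n:ℝ)) 0 := by
      intro x hx
      obtain ⟨n, hn⟩ := exists_nat_gt (-x)
      exact Set.mem_iUnion.2 ⟨n, by linarith, hx⟩
    refine lt_of_le_of_lt (measure_mono hsub) ?_
    have hmono : Monotone (fun n : ℕ => Set.Ico (-(n:ℝ)) 0) := fun m n hmn =>
      Set.Ico_subset_Ico_left (neg_le_neg (by exact_mod_cast hmn))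
    rw [hmono.measure_iUnion]
    refine lt_of_le_of_lt (iSup_le fun n => ?_) (ENNReal.ofReal_lt_top (r := -r))
    rw [ico_eq hlf ω (by simp), F_zero, zero_sub]
    exact ENNReal.ofReal_le_ofReal (neg_le_neg (h _))

end Gsec

section Core
variable {Ω : Type*} [MeasurableSpace Ω]

/-- the weight -/
noncomputable def k (w : ℝ) : ℝ → ℝ≥0∞ := (Set.Ioc 0 w).indicator 1

lemma k_meas (w : ℝ) : Measurable (k w) := measurable_one.indicator measurableSet_Ioc

lemma k_int (w : ℝ) : ∫⁻ x, k w x = ENNReal.ofReal w := by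
  unfold k
  rw [lintegral_indicator_one measurableSet_Ioc, Real.volume_Ioc, sub_zero]

lemma k_sub (w a : ℝ) : ∫⁻ r, k w (a - r) = ENNReal.ofReal w := by
  rw [lintegral_sub_left_eq_self (k w) a, k_int]

lemma k_add (w a : ℝ) : ∫⁻ r, k w (a + r) = ENNReal.ofReal w := by
  rw [lintegral_add_left_eq_self (k w) a, k_int]

variable (θ : ℝ → Ω → Ω) (hθm : Measurable fun p : ℝ × Ω => θ p.1 p.2)
    (hθ0 : θ 0 = id) (hθadd : ∀ s t : ℝ, θ (s + t) = θ s ∘ θ t)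
    (Q : Measure Ω) [SigmaFinite Q] (G : Set Ω) (F : Ω → ℝ → ℝ) (S : ℝ → Ω → ℝ)
    (hFm : Measurable fun p : Ω × ℝ => F p.1 p.2)
    (hSm : Measurable fun p : ℝ × Ω => S p.1 p.2)
    (hF : ∀ s t ω, F (θ s ω) t = F ω (t + s) - F ω s)
    (hG : ∀ᵐ ω ∂Q, ω ∈ G)
    (hFS : ∀ ω ∈ G, ∀ r, F ω (S r ω) = r)
    (hSs : ∀ ω ∈ G, ∀ r s, S r (θ s ω) = S (r + F ω s) ω - s)
    (hT : ∀ r, Measure.map (fun ω => θ (S r ω) ω) Q = Q)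
    (w : ℝ) (hw : 0 < w)

lemma swap3 (g : ℝ → Ω → ℝ → ℝ≥0∞)
    (hg : Measurable fun p : ℝ × Ω × ℝ => g p.1 p.2.1 p.2.2) :
    ∫⁻ r, ∫⁻ ω, ∫⁻ s, g r ω s ∂volume ∂Q = ∫⁻ ω, ∫⁻ s, ∫⁻ r, g r ω s ∂volume ∂volume ∂Q := by
  have h1 : Measurable (Function.uncurry (fun (q : ℝ × Ω) (s : ℝ) => g q.1 q.2 s)) :=
    hg.comp (by fun_prop : Measurable fun p : (ℝ × Ω) × ℝ => (p.1.1, p.1.2, p.2))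
  have h2 : Measurable (Function.uncurry fun (r : ℝ) (ω : Ω) => ∫⁻ s, g r ω s) :=
    h1.lintegral_prod_right
  rw [lintegral_lintegral_swap h2.aemeasurable]
  refine lintegral_congr fun ω => ?_
  have h3 : Measurable (Function.uncurry fun (r s : ℝ) => g r ω s) :=
    hg.comp (by fun_prop : Measurable fun p : ℝ × ℝ => (p.1, ω, p.2))
  rw [lintegral_lintegral_swap h3.aemeasurable]

lemma slice (g : ℝ → Ω → ℝ → ℝ≥0∞)
    (hg : Measurable fun p : ℝ × Ω × ℝ => g p.1 p.2.1 p.2.2) (r : ℝ) :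
    Measurable fun ω => ∫⁻ s, g r ω s := by
  have h1 : Measurable (Function.uncurry (fun (ω : Ω) (s : ℝ) => g r ω s)) :=
    hg.comp (by fun_prop : Measurable fun p : Ω × ℝ => (r, p.1, p.2))
  exact h1.lintegral_prod_right

include hθm hSm hT in
lemma shift_int (r : ℝ) (H : Ω → ℝ≥0∞) (hH : Measurable H) :
    ∫⁻ ω, H (θ (S r ω) ω) ∂Q = ∫⁻ ω, H ω ∂Q := by
  have hm : Measurable (fun ω => θ (S r ω) ω) :=
    hθm.comp ((hSm.comp measurable_prodMk_left).prodMk measurable_id)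
  conv_rhs => rw [← hT r]
  rw [lintegral_map hH hm]

include hθm hSm hFS hSs hT hG in
lemma S_zero : ∀ᵐ ω ∂Q, S 0 ω = 0 := by
  have hm : Measurable (fun ω => θ (S 0 ω) ω) :=
    hθm.comp ((hSm.comp measurable_prodMk_left).prodMk measurable_id)
  have h0 : Measurable (S 0) := hSm.comp measurable_prodMk_left
  rw [← hT 0, ae_map_iff hm.aemeasurable (measurableSet_eq_fun h0 measurable_const)]
  filter_upwards [hG] with ω hω
  rw [hSs ω hω, hFS ω hω, add_zero, sub_self]

include hθm hθadd hFm hSm hF hG hFS hT hw in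
lemma core1 (f : Ω → ℝ≥0∞) (hf : Measurable f) (t : ℝ) :
    ∫⁻ ω, ∫⁻ s, k w (F ω s) * f (θ (s + t) ω) ∂volume ∂Q =
    ∫⁻ ω, ∫⁻ s, k w (F ω s) * f (θ s ω) ∂volume ∂Q := by
  have hk := k_meas w
  have hw0 : ENNReal.ofReal w ≠ 0 := by simpa using hw
  rw [← ENNReal.mul_right_inj hw0 ENNReal.ofReal_ne_top]
  have m1 : Measurable fun p : ℝ × Ω × ℝ => k w (F p.2.1 (p.2.2 - t)) :=
    hk.comp (hFm.comp (by fun_prop : Measurable fun p : ℝ × Ω × ℝ => (p.2.1, p.2.2 - t)))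
  have m2 : Measurable fun p : ℝ × Ω × ℝ => k w (F p.2.1 p.2.2 - p.1) :=
    hk.comp ((hFm.comp measurable_snd).sub measurable_fst)
  have m3 : Measurable fun p : ℝ × Ω × ℝ => f (θ p.2.2 p.2.1) :=
    hf.comp (hθm.comp (by fun_prop : Measurable fun p : ℝ × Ω × ℝ => (p.2.2, p.2.1)))
  have m4 : Measurable fun p : ℝ × Ω × ℝ => k w (F p.2.1 (p.2.2 - t) + p.1) :=
    hk.comp ((hFm.comp (by fun_prop : Measurable fun p : ℝ × Ω × ℝ => (p.2.1, p.2.2 - t))).add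
      measurable_fst)
  have m5 : Measurable fun p : ℝ × Ω × ℝ => k w (F p.2.1 p.2.2) :=
    hk.comp (hFm.comp measurable_snd)
  have mA := (m1.mul m2).mul m3
  have mB := (m4.mul m5).mul m3
  -- left
  have hL : ENNReal.ofReal w * ∫⁻ ω, ∫⁻ s, k w (F ω s) * f (θ (s + t) ω) ∂volume ∂Q =
      ∫⁻ r, ∫⁻ ω, ∫⁻ s, k w (F ω (s - t)) * k w (F ω s - r) * f (θ s ω) ∂volume ∂Q := by
    refine Eq.trans ?_ (swap3 Q (fun r ω s => k w (F ω (s - t)) * k w (F ω s - r) * f (θ s ω)) mA).symm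
    rw [← lintegral_const_mul' _ _ ENNReal.ofReal_ne_top]
    refine lintegral_congr fun ω => ?_
    rw [← lintegral_const_mul' _ _ ENNReal.ofReal_ne_top]
    rw [← lintegral_sub_right_eq_self _ t]
    refine lintegral_congr fun s => ?_
    have : ∀ r, k w (F ω (s - t)) * k w (F ω s - r) * f (θ s ω) =
      k w (F ω s - r) * (k w (F ω (s - t)) * f (θ s ω)) := fun r => by ring
    simp only [this]
    rw [lintegral_mul_const _ (by fun_prop), k_sub, sub_add_cancel]
  have hR : ENNReal.ofReal w * ∫⁻ ω, ∫⁻ s, k w (F ω s) * f (θ s ω) ∂volume ∂Q =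
      ∫⁻ r, ∫⁻ ω, ∫⁻ s, k w (F ω (s - t) + r) * k w (F ω s) * f (θ s ω) ∂volume ∂Q := by
    refine Eq.trans ?_ (swap3 Q (fun r ω s => k w (F ω (s - t) + r) * k w (F ω s) * f (θ s ω)) mB).symm
    rw [← lintegral_const_mul' _ _ ENNReal.ofReal_ne_top]
    refine lintegral_congr fun ω => ?_
    rw [← lintegral_const_mul' _ _ ENNReal.ofReal_ne_top]
    refine lintegral_congr fun s => ?_
    simp only [mul_assoc]
    rw [lintegral_mul_const _ (by fun_prop), k_add]
  rw [hL, hR]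
  refine lintegral_congr fun r => ?_
  rw [← shift_int θ hθm Q S hSm hT (-r) (fun ω => ∫⁻ s, k w (F ω (s - t)) * k w (F ω s - r) * f (θ s ω))
    (slice (fun r ω s => k w (F ω (s - t)) * k w (F ω s - r) * f (θ s ω)) mA r)]
  refine lintegral_congr_ae ?_
  filter_upwards [hG] with ω hω
  rw [← lintegral_add_right_eq_self (fun s => k w (F ω (s - t) + r) * k w (F ω s) * f (θ s ω)) (S (-r) ω)]
  refine lintegral_congr fun s => ?_
  simp only [hF, hFS ω hω]
  rw [hθadd]
  simp only [Function.comp]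
  congr 3
  · congr 1; ring_nf
  · ring_nf

include hθm hθ0 hθadd hFm hSm hF hG hFS hSs hT in
lemma core2 (f : Ω → ℝ≥0∞) (hf : Measurable f) :
    ∫⁻ ω, ∫⁻ u, k w (F ω u) * (∫⁻ r, (Set.Icc (0:ℝ) 1).indicator 1 (S r ω - u) * f (θ (S r ω) ω)) ∂volume ∂Q =
    ENNReal.ofReal w * ∫⁻ ω, f ω ∂Q := by
  have hk := k_meas w
  set I : ℝ → ℝ≥0∞ := (Set.Icc (0:ℝ) 1).indicator 1 with hI
  have hIm : Measurable I := measurable_one.indicator measurableSet_Icc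
  have hI1 : ∀ a, ∫⁻ v, I (a - v) = 1 := by
    intro a
    rw [lintegral_sub_left_eq_self I a, hI, lintegral_indicator_one measurableSet_Icc]
    simp
  have m1 : Measurable fun p : ℝ × Ω × ℝ => k w (F p.2.1 p.2.2) :=
    hk.comp (hFm.comp measurable_snd)
  have mS : Measurable fun p : ℝ × Ω × ℝ => S p.1 p.2.1 :=
    hSm.comp (by fun_prop : Measurable fun p : ℝ × Ω × ℝ => (p.1, p.2.1))
  have m2 : Measurable fun p : ℝ × Ω × ℝ => I (S p.1 p.2.1 - p.2.2) :=
    hIm.comp (mS.sub (by fun_prop))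
  have m3 : Measurable fun p : ℝ × Ω × ℝ => f (θ (S p.1 p.2.1) p.2.1) :=
    hf.comp (hθm.comp (mS.prodMk (by fun_prop)))
  have m4 : Measurable fun p : ℝ × Ω × ℝ => k w (F p.2.1 p.2.2 + p.1) :=
    hk.comp ((hFm.comp measurable_snd).add measurable_fst)
  have m5 : Measurable fun p : ℝ × Ω × ℝ => I (S 0 p.2.1 - p.2.2) :=
    hIm.comp (((hSm.comp (by fun_prop : Measurable fun p : ℝ × Ω × ℝ => ((0:ℝ), p.2.1)))).sub (by fun_prop))
  have m6 : Measurable fun p : ℝ × Ω × ℝ => f p.2.1 := hf.comp (by fun_prop)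
  have mA := m1.mul (m2.mul m3)
  have mB := m4.mul (m5.mul m6)
  have hL : ∫⁻ ω, ∫⁻ u, k w (F ω u) * (∫⁻ r, I (S r ω - u) * f (θ (S r ω) ω)) ∂volume ∂Q =
      ∫⁻ r, ∫⁻ ω, ∫⁻ u, k w (F ω u) * (I (S r ω - u) * f (θ (S r ω) ω)) ∂volume ∂Q := by
    refine Eq.trans ?_ (swap3 Q (fun r ω u => k w (F ω u) * (I (S r ω - u) * f (θ (S r ω) ω))) mA).symm
    refine lintegral_congr fun ω => ?_
    refine lintegral_congr fun u => ?_
    rw [lintegral_const_mul]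
    exact (m2.mul m3).comp (by fun_prop : Measurable fun r : ℝ => (r, ω, u))
  have hR : ENNReal.ofReal w * ∫⁻ ω, f ω ∂Q =
      ∫⁻ r, ∫⁻ ω, ∫⁻ u, k w (F ω u + r) * (I (S 0 ω - u) * f ω) ∂volume ∂Q := by
    refine Eq.trans ?_ (swap3 Q (fun r ω u => k w (F ω u + r) * (I (S 0 ω - u) * f ω)) mB).symm
    rw [← lintegral_const_mul' _ _ ENNReal.ofReal_ne_top]
    refine lintegral_congr fun ω => ?_
    have : ∀ u, ∫⁻ r, k w (F ω u + r) * (I (S 0 ω - u) * f ω) =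
        ENNReal.ofReal w * (I (S 0 ω - u) * f ω) := by
      intro u
      rw [lintegral_mul_const _ (by fun_prop), k_add]
    simp only [this]
    rw [lintegral_const_mul' _ _ ENNReal.ofReal_ne_top,
      lintegral_mul_const _ (by fun_prop), hI1, one_mul]
  rw [hL, hR]
  refine lintegral_congr fun r => ?_
  rw [← shift_int θ hθm Q S hSm hT (-r) (fun ω => ∫⁻ u, k w (F ω u) * (I (S r ω - u) * f (θ (S r ω) ω)))
    (slice (fun r ω u => k w (F ω u) * (I (S r ω - u) * f (θ (S r ω) ω))) mA r)]
  refine lintegral_congr_ae ?_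
  filter_upwards [hG, S_zero θ hθm Q G F S hSm hG hFS hSs hT] with ω hω h0
  rw [← lintegral_add_right_eq_self (fun u => k w (F ω u + r) * (I (S 0 ω - u) * f ω)) (S (-r) ω)]
  refine lintegral_congr fun u => ?_
  have e1 : S r (θ (S (-r) ω) ω) = S 0 ω - S (-r) ω := by
    rw [hSs ω hω, hFS ω hω, add_neg_cancel]
  have e2 : θ (S 0 ω - S (-r) ω) (θ (S (-r) ω) ω) = ω := by
    rw [← Function.comp_apply (f := θ _), ← hθadd, sub_add_cancel, h0, hθ0]; rfl
  rw [e1, e2, hF, hFS ω hω]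
  congr 2
  · ring_nf
  · congr 1; ring_nf

end Core
end MSP

/-- if `Q` is invariant under `ω ↦ θ_{S_r(ω)}(ω)` for every `r`, then for any
`w > 0` the measure `Q*` defined by `∫ f dQ* = w⁻¹ ∫ ∫_0^{S_w(ω)} f(θ_s ω) ds Q(dω)` is
stationary, and `Q` is the Palm measure of `ξ` with respect to `Q*`. -/
theorem mass_stationary_implies_palm {Ω : Type*} [MeasurableSpace Ω]
    (θ : ℝ → Ω → Ω) (hθm : Measurable fun p : ℝ × Ω => θ p.1 p.2)
    (hθ0 : θ 0 = id) (hθadd : ∀ s t : ℝ, θ (s + t) = θ s ∘ θ t)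
    (ξ : Kernel Ω ℝ)
    (hdiffuse : ∀ (ω : Ω) (x : ℝ), ξ ω {x} = 0)
    (hlf : ∀ (ω : Ω) (K : Set ℝ), IsCompact K → ξ ω K < ⊤)
    (hequiv : ∀ (t : ℝ) (C : Set ℝ), MeasurableSet C →
      ∀ ω : Ω, ξ (θ t ω) {x : ℝ | x + t ∈ C} = ξ ω C)
    (Q : Measure Ω) [SigmaFinite Q]
    (hQleft : Q {ω | ξ ω (Set.Iio 0) < ⊤} = 0)
    (hQright : Q {ω | ξ ω (Set.Ioi 0) < ⊤} = 0)
    (hshift : ∀ r : ℝ, Measure.map (fun ω => θ (Sr ξ r ω) ω) Q = Q)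
    (w : ℝ) (hw : 0 < w)
    (Qstar : Measure Ω)
    (hQstar : ∀ f : Ω → ℝ≥0∞, Measurable f →
      ∫⁻ ω, f ω ∂Qstar =
        (ENNReal.ofReal w)⁻¹ * ∫⁻ ω, ∫⁻ s in Set.Ioc 0 (Sr ξ w ω), f (θ s ω) ∂volume ∂Q) :
    (∀ t : ℝ, Measure.map (θ t) Qstar = Qstar) ∧
    (∀ f : Ω → ℝ≥0∞, Measurable f →
      ∫⁻ ω, ∫⁻ s in Set.Icc (0 : ℝ) 1, f (θ s ω) ∂(ξ ω) ∂Qstar = ∫⁻ ω, f ω ∂Q) := by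
  classical
  set G := MSP.G ξ with hGdef
  set F := MSP.F ξ with hFdef
  set S := MSP.S ξ with hSdef
  have hFm : Measurable fun p : Ω × ℝ => F p.1 p.2 := MSP.F_meas hdiffuse hlf
  have hSm : Measurable fun p : ℝ × Ω => S p.1 p.2 := MSP.S_meas hdiffuse hlf
  have hF : ∀ s t ω, F (θ s ω) t = F ω (t + s) - F ω s :=
    fun s t ω => MSP.F_shift hlf hequiv s t ω
  have hG : ∀ᵐ ω ∂Q, ω ∈ G := MSP.G_ae hlf hQleft hQright
  have hGm : MeasurableSet G := MSP.G_meas hdiffuse hlf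
  have hFS : ∀ ω ∈ G, ∀ r, F ω (S r ω) = r := fun ω hω r => MSP.F_S hdiffuse hlf hω r
  have hSs : ∀ ω ∈ G, ∀ r s, S r (θ s ω) = S (r + F ω s) ω - s :=
    fun ω hω r s => MSP.S_shift hdiffuse hlf hequiv r s hω
  have hSeq : ∀ ω ∈ G, ∀ r, S r ω = Sr ξ r ω := fun ω hω r => if_pos hω
  have hSiff : ∀ ω ∈ G, ∀ r t, S r ω < t ↔ r < F ω t := fun ω hω r t => MSP.S_iff hdiffuse hlf hω r t
  have hGsh : ∀ ω ∈ G, ∀ s, θ s ω ∈ G := fun ω hω s => MSP.G_shift hlf hequiv s hω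
  have hmS : ∀ ω ∈ G, Measure.map (fun r => S r ω) volume = ξ ω :=
    fun ω hω => MSP.map_S hdiffuse hlf hω
  clear_value S F G
  have hT : ∀ r, Measure.map (fun ω => θ (S r ω) ω) Q = Q := by
    intro r
    conv_rhs => rw [← hshift r]
    refine Measure.map_congr ?_
    filter_upwards [hG] with ω hω
    rw [hSeq ω hω]
  have hk := MSP.k_meas w
  have hS0 := MSP.S_zero θ hθm Q G F S hSm hG hFS hSs hT
  have hQs : ∀ f : Ω → ℝ≥0∞, Measurable f → ∫⁻ ω, f ω ∂Qstar =
      (ENNReal.ofReal w)⁻¹ * ∫⁻ ω, ∫⁻ s, MSP.k w (F ω s) * f (θ s ω) ∂volume ∂Q := by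
    intro f hf
    rw [hQstar f hf]
    congr 1
    refine lintegral_congr_ae ?_
    filter_upwards [hG, hS0] with ω hω h0
    rw [← lintegral_indicator measurableSet_Ioc]
    refine lintegral_congr fun s => ?_
    have h : s ∈ Set.Ioc 0 (Sr ξ w ω) ↔ F ω s ∈ Set.Ioc 0 w := by
      have a1 : S 0 ω < s ↔ 0 < F ω s := hSiff ω hω 0 s
      have a2 : S w ω < s ↔ w < F ω s := hSiff ω hω w s
      rw [h0] at a1
      rw [hSeq ω hω] at a2
      rw [Set.mem_Ioc, Set.mem_Ioc, a1, ← not_lt, a2, not_lt]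
    by_cases hs : s ∈ Set.Ioc 0 (Sr ξ w ω)
    · rw [Set.indicator_of_mem hs, MSP.k, Set.indicator_of_mem (h.1 hs)]; simp
    · rw [Set.indicator_of_notMem hs, MSP.k, Set.indicator_of_notMem (fun h' => hs (h.2 h'))]; simp
  have hθt : ∀ t, Measurable (θ t) := fun t => hθm.comp measurable_prodMk_left
  refine ⟨fun t => ?_, fun f hf => ?_⟩
  · refine Measure.ext_of_lintegral _ fun f hf => ?_
    rw [lintegral_map hf (hθt t), hQs (fun ω => f (θ t ω)) (hf.comp (hθt t)), hQs f hf,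
      ← MSP.core1 θ hθm hθadd Q G F S hFm hSm hF hG hFS hT w hw f hf t]
    congr 1
    refine lintegral_congr fun ω => lintegral_congr fun s => ?_
    rw [add_comm s t, hθadd]; rfl
  · have hGs : ∀ᵐ ω ∂Qstar, ω ∈ G := by
      rw [ae_iff]
      have := hQs (Set.indicator Gᶜ 1) (measurable_one.indicator hGm.compl)
      rw [lintegral_indicator_one hGm.compl] at this
      change Qstar Gᶜ = 0
      rw [this]
      refine mul_eq_zero_of_right _ ?_
      rw [← lintegral_zero (μ := Q)]
      refine lintegral_congr_ae ?_
      filter_upwards [hG] with ω hω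
      rw [← lintegral_zero (μ := (volume : Measure ℝ))]
      refine lintegral_congr fun s => ?_
      have hin : θ s ω ∈ G := hGsh ω hω s
      rw [Set.indicator_of_notMem (by simpa using hin), mul_zero]
    set I : ℝ → ℝ≥0∞ := (Set.Icc (0:ℝ) 1).indicator 1 with hI
    have hIm : Measurable I := measurable_one.indicator measurableSet_Icc
    have hJm : Measurable (fun ω => ∫⁻ r, I (S r ω) * f (θ (S r ω) ω)) := by
      have : Measurable (fun p : Ω × ℝ => I (S p.2 p.1) * f (θ (S p.2 p.1) p.1)) := by
        have mS : Measurable fun p : Ω × ℝ => S p.2 p.1 := hSm.comp measurable_swap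
        exact (hIm.comp mS).mul (hf.comp (hθm.comp (mS.prodMk measurable_fst)))
      exact this.lintegral_prod_right
    have h1 : ∫⁻ ω, ∫⁻ s in Set.Icc (0 : ℝ) 1, f (θ s ω) ∂(ξ ω) ∂Qstar =
        ∫⁻ ω, ∫⁻ r, I (S r ω) * f (θ (S r ω) ω) ∂volume ∂Qstar := by
      refine lintegral_congr_ae ?_
      filter_upwards [hGs] with ω hω
      have hm : Measurable fun s => f (θ s ω) :=
        hf.comp (hθm.comp (measurable_id.prodMk measurable_const))
      have hSr : Measurable fun r => S r ω :=
        hSm.comp (measurable_id.prodMk measurable_const)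
      rw [← lintegral_indicator measurableSet_Icc]
      have e : ∀ s, (Set.Icc (0:ℝ) 1).indicator (fun s => f (θ s ω)) s = I s * f (θ s ω) := by
        intro s
        by_cases hs : s ∈ Set.Icc (0:ℝ) 1
        · simp only [hI, Set.indicator_of_mem hs, Pi.one_apply, one_mul]
        · simp only [hI, Set.indicator_of_notMem hs, zero_mul]
      simp only [e]
      have hprod : Measurable fun s => I s * f (θ s ω) := hIm.mul hm
      rw [← hmS ω hω, lintegral_map hprod hSr]
    rw [h1, hQs _ hJm]
    have h2 := MSP.core2 θ hθm hθ0 hθadd Q G F S hFm hSm hF hG hFS hSs hT w f hf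
    have hw0 : ENNReal.ofReal w ≠ 0 := by simpa using hw
    rw [← one_mul (∫⁻ ω, f ω ∂Q), ← ENNReal.inv_mul_cancel hw0 ENNReal.ofReal_ne_top, mul_assoc, ← h2]
    congr 1
    refine lintegral_congr_ae ?_
    filter_upwards [hG] with ω hω
    refine lintegral_congr fun u => ?_
    congr 1
    rw [← lintegral_add_right_eq_self (fun r => I (S r ω - u) * f (θ (S r ω) ω)) (F ω u)]
    refine lintegral_congr fun r => ?_
    rw [hSs ω hω, ← Function.comp_apply (f := θ _), ← hθadd, sub_add_cancel]
end

section
/- Assume there is a σ-finite measure Q* on Ω that is invariant under every θ_t, satisfies Q*{ω : ξ(ω,(−∞,0)) < ∞} = Q*{ω : ξ(ω,(0,∞)) < ∞} = 0, and such that Q is the Palm measure of ξ with respect to Q*, i.e. Q(A) = ∫_Ω ∫_ℝ 1_{[0,1]}(s) 1_A(θ_s ω) ξ(ω, ds) Q*(dω) for every measurable A ⊆ Ω. Then for every r ∈ ℝ the image measure of Q under the map ω ↦ θ_{S_r(ω)}(ω) equals Q. -/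
open MeasureTheory ProbabilityTheory
open scoped ENNReal

namespace PalmMS

noncomputable def F (μ : Measure ℝ) (t : ℝ) : ℝ := μ.real (Set.Ioc 0 t) - μ.real (Set.Ioc t 0)

noncomputable def G (μ : Measure ℝ) (y : ℝ) : ℝ := sSup {t | F μ t ≤ y}

structure Good (μ : Measure ℝ) : Prop where
  d : ∀ x, μ {x} = 0
  lf : ∀ K : Set ℝ, IsCompact K → μ K < ⊤
  l : μ (Set.Iio 0) = ⊤
  r : μ (Set.Ioi 0) = ⊤

lemma F_eq (μ : Measure ℝ) (t : ℝ) : F μ t = ∫ _ in (0:ℝ)..t, (1:ℝ) ∂μ := by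
  rw [intervalIntegral.integral_const']; simp [F]

lemma lfm {μ : Measure ℝ} (lf : ∀ K : Set ℝ, IsCompact K → μ K < ⊤) : IsLocallyFiniteMeasure μ := by
  refine ⟨fun x => ⟨Set.Icc (x-1) (x+1), Icc_mem_nhds (by linarith) (by linarith), lf _ isCompact_Icc⟩⟩

lemma F_sub {μ : Measure ℝ} (lf : ∀ K : Set ℝ, IsCompact K → μ K < ⊤) {a b : ℝ} (hab : a ≤ b) :
    F μ b - F μ a = μ.real (Set.Ioc a b) := by
  have := lfm lf
  rw [F_eq, F_eq, intervalIntegral.integral_interval_sub_left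
    (_root_.intervalIntegrable_const) (_root_.intervalIntegrable_const), intervalIntegral.integral_const']
  simp [hab]

lemma F_zero (μ : Measure ℝ) : F μ 0 = 0 := by simp [F]

lemma F_mono {μ : Measure ℝ} (lf : ∀ K : Set ℝ, IsCompact K → μ K < ⊤) : Monotone (F μ) := by
  intro a b hab
  have := F_sub lf hab
  have h2 : 0 ≤ μ.real (Set.Ioc a b) := measureReal_nonneg
  linarith

lemma Ioc_eq {μ : Measure ℝ} (lf : ∀ K : Set ℝ, IsCompact K → μ K < ⊤) {a b : ℝ} (hab : a ≤ b) :
    μ (Set.Ioc a b) = ENNReal.ofReal (F μ b - F μ a) := by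
  rw [F_sub lf hab, ofReal_measureReal
    ((measure_mono Set.Ioc_subset_Icc_self).trans_lt (lf _ isCompact_Icc)).ne]

lemma F_cont {μ : Measure ℝ} (h : Good μ) : Continuous (F μ) := by
  have := lfm h.lf
  have : NullSingletonClass μ := ⟨h.d⟩
  have : F μ = fun t => ∫ _ in (0:ℝ)..t, (1:ℝ) ∂μ := funext (F_eq μ)
  rw [this]
  exact intervalIntegral.continuous_primitive (fun a b => _root_.intervalIntegrable_const) 0

lemma F_top {μ : Measure ℝ} (h : Good μ) (y : ℝ) : ∃ t, y ≤ F μ t := by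
  by_contra! hc
  have h1 : (Set.Ioi (0:ℝ)) = ⋃ n : ℕ, Set.Ioc (0:ℝ) n := by
    ext x
    simp only [Set.mem_Ioi, Set.mem_iUnion, Set.mem_Ioc]
    exact ⟨fun hx => (exists_nat_ge x).imp fun n hn => ⟨hx, hn⟩, fun ⟨n, hn⟩ => hn.1⟩
  have h2 := h.r
  rw [h1, Monotone.measure_iUnion] at h2
  · have : (⨆ n : ℕ, μ (Set.Ioc (0:ℝ) n)) ≤ ENNReal.ofReal y := by
      refine iSup_le fun n => ?_
      rw [Ioc_eq h.lf (Nat.cast_nonneg n), F_zero]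
      exact ENNReal.ofReal_le_ofReal (by linarith [hc n])
    rw [h2] at this
    exact absurd this (by simp)
  · intro m n hmn
    exact Set.Ioc_subset_Ioc_right (by exact_mod_cast hmn)

lemma F_bot {μ : Measure ℝ} (h : Good μ) (y : ℝ) : ∃ t, F μ t ≤ y := by
  by_contra! hc
  have h1 : (Set.Iic (0:ℝ)) = ⋃ n : ℕ, Set.Ioc (-(n:ℝ)) 0 := by
    ext x
    simp only [Set.mem_Iic, Set.mem_iUnion, Set.mem_Ioc]
    refine ⟨fun hx => (exists_nat_gt (-x)).imp fun n hn => ⟨by linarith, hx⟩, fun ⟨n, hn⟩ => hn.2⟩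
  have h2 : μ (Set.Iic 0) = ⊤ := by
    have := measure_mono (μ := μ) (Set.Iio_subset_Iic_self (a := (0:ℝ)))
    rw [h.l] at this
    exact top_le_iff.1 this
  rw [h1, Monotone.measure_iUnion] at h2
  · have : (⨆ n : ℕ, μ (Set.Ioc (-(n:ℝ)) 0)) ≤ ENNReal.ofReal (-y) := by
      refine iSup_le fun n => ?_
      rw [Ioc_eq h.lf (by simp), F_zero]
      exact ENNReal.ofReal_le_ofReal (by linarith [hc (-(n:ℝ))])
    rw [h2] at this
    exact absurd this (by simp)
  · intro m n hmn
    refine Set.Ioc_subset_Ioc_left ?_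
    have : (m:ℝ) ≤ n := by exact_mod_cast hmn
    linarith

lemma F_surj {μ : Measure ℝ} (h : Good μ) (y : ℝ) : ∃ t, F μ t = y :=
  mem_range_of_exists_le_of_exists_ge (F_cont h) (F_bot h y) (F_top h y)

lemma bdd {μ : Measure ℝ} (h : Good μ) (y : ℝ) : BddAbove {t | F μ t ≤ y} := by
  obtain ⟨t, ht⟩ := F_top h (y+1)
  refine ⟨t, fun s hs => ?_⟩
  by_contra! hc
  have := F_mono h.lf hc.le
  simp only [Set.mem_ofPred_eq] at hs
  linarith

lemma F_G {μ : Measure ℝ} (h : Good μ) (y : ℝ) : F μ (G μ y) = y := by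
  apply le_antisymm
  · have : IsClosed {t | F μ t ≤ y} := isClosed_le (F_cont h) continuous_const
    exact this.csSup_mem (F_bot h y) (bdd h y)
  · obtain ⟨t, ht⟩ := F_surj h y
    conv_lhs => rw [← ht]
    exact F_mono h.lf (le_csSup (bdd h y) ht.le)

lemma le_G {μ : Measure ℝ} (h : Good μ) (x y : ℝ) : x ≤ G μ y ↔ F μ x ≤ y :=
  ⟨fun hx => (F_mono h.lf hx).trans (F_G h y).le, fun hx => le_csSup (bdd h y) hx⟩

lemma G_mono {μ : Measure ℝ} (h : Good μ) : Monotone (G μ) := by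
  intro a b hab
  rw [le_G h, F_G h]; exact hab

lemma map_F {μ : Measure ℝ} (h : Good μ) : μ.map (F μ) = volume := by
  symm
  refine Measure.ext_of_Ioc _ _ fun a b hab => ?_
  have hm := (F_cont h).measurable
  rw [Measure.map_apply hm measurableSet_Ioc]
  have : F μ ⁻¹' Set.Ioc a b = Set.Ioc (G μ a) (G μ b) := by
    ext x
    simp only [Set.mem_preimage, Set.mem_Ioc, le_G h]
    rw [← not_le, ← le_G h, not_le]
  rw [this, Ioc_eq h.lf (G_mono h hab.le), F_G h, F_G h, Real.volume_Ioc]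

lemma G_F {μ : Measure ℝ} (h : Good μ) : ∀ᵐ s ∂μ, G μ (F μ s) = s := by
  have h0 : ∀ᵐ s ∂μ, ∀ q : ℚ, F μ s ≠ F μ q := by
    rw [ae_all_iff]
    intro q
    have hm := (F_cont h).measurable
    have : μ (F μ ⁻¹' {F μ q}) = 0 := by
      rw [← Measure.map_apply hm (measurableSet_singleton _), map_F h]; simp
    rw [ae_iff]
    convert this using 2
    ext x; simp
  filter_upwards [h0] with s hs
  apply le_antisymm
  · by_contra! hc
    obtain ⟨q, h1, h2⟩ := exists_rat_btwn hc
    exact hs q (le_antisymm (F_mono h.lf h1.le) ((le_G h _ _).1 h2.le))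
  · rw [le_G h]

lemma map_tau {μ : Measure ℝ} (h : Good μ) (r : ℝ) : μ.map (fun s => G μ (F μ s + r)) = μ := by
  have hF := (F_cont h).measurable
  have hG := (G_mono h).measurable
  have e1 : μ.map (fun s => F μ s + r) = volume := by
    have : (fun s => F μ s + r) = (fun x => x + r) ∘ F μ := rfl
    rw [this, ← Measure.map_map (by fun_prop) hF, map_F h, map_add_right_eq_self]
  have e2 : (volume : Measure ℝ).map (G μ) = μ := by
    rw [← map_F h, Measure.map_map hG hF]
    conv_rhs => rw [← Measure.map_id (μ := μ)]
    exact Measure.map_congr (G_F h)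
  have : (fun s => G μ (F μ s + r)) = G μ ∘ (fun s => F μ s + r) := rfl
  rw [this, ← Measure.map_map hG (hF.add_const r), e1, e2]

lemma tau_tau {μ : Measure ℝ} (h : Good μ) (r : ℝ) :
    ∀ᵐ s ∂μ, G μ (F μ (G μ (F μ s + r)) + -r) = s := by
  filter_upwards [G_F h] with s hs
  rw [F_G h, add_neg_cancel_right, hs]

lemma Icc_eq {μ : Measure ℝ} (h : Good μ) {a b : ℝ} (hab : a ≤ b) :
    μ (Set.Icc a b) = ENNReal.ofReal (F μ b - F μ a) := by
  have : NullSingletonClass μ := ⟨h.d⟩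
  rw [← Ioc_eq h.lf hab]
  exact measure_congr Ioc_ae_eq_Icc.symm

lemma Sr_eq {Ω : Type*} [MeasurableSpace Ω] (ξ : Kernel Ω ℝ) (r : ℝ) (ω : Ω) (h : Good (ξ ω)) :
    Sr ξ r ω = G (ξ ω) r := by
  unfold Sr
  split_ifs with hr
  · apply IsGreatest.csSup_eq
    constructor
    · have : 0 ≤ G (ξ ω) r := by rw [le_G h, F_zero]; exact hr
      refine ⟨this, ?_⟩
      rw [Icc_eq h this, F_G h, F_zero, sub_zero]
    · rintro t ⟨ht, h2⟩
      have h3 := F_mono h.lf ht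
      rw [F_zero] at h3
      rw [Icc_eq h ht, F_zero, sub_zero, ENNReal.ofReal_eq_ofReal_iff h3 hr] at h2
      rw [le_G h]; exact h2.le
  · push Not at hr
    apply IsGreatest.csSup_eq
    constructor
    · have : G (ξ ω) r < 0 := by rw [← not_le, le_G h, F_zero, not_le]; exact hr
      refine ⟨this, ?_⟩
      rw [Icc_eq h this.le, F_G h, F_zero, zero_sub]
    · rintro t ⟨ht, h2⟩
      have h3 := F_mono h.lf ht.le
      rw [F_zero] at h3
      rw [Icc_eq h ht.le, F_zero, zero_sub, ENNReal.ofReal_eq_ofReal_iff (by linarith) (by linarith)] at h2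
      rw [le_G h]; linarith

lemma G_shift {μ ν : Measure ℝ} (hμ : Good μ) (hν : Good ν) (s : ℝ)
    (e : ν.map (fun x => x + s) = μ) (r : ℝ) : s + G ν r = G μ (F μ s + r) := by
  have key : ∀ a b, a ≤ b → F ν b - F ν a = F μ (b+s) - F μ (a+s) := by
    intro a b hab
    rw [F_sub hν.lf hab, F_sub hμ.lf (by linarith), ← e, map_measureReal_apply (by fun_prop) measurableSet_Ioc]
    simp
  have key2 : ∀ x, F ν x = F μ (x+s) - F μ s := by
    intro x
    rcases le_total 0 x with hx | hx
    · have := key 0 x hx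
      rw [F_zero, zero_add] at this; linarith
    · have := key x 0 hx
      rw [F_zero, zero_add] at this; linarith
  apply eq_of_forall_le_iff
  intro c
  rw [le_G hμ, ← sub_le_iff_le_add', le_G hν, key2, sub_add_cancel, sub_le_iff_le_add']

lemma sfin {Ω : Type*} [MeasurableSpace Ω] (ξ : Kernel Ω ℝ)
    (hlf : ∀ (ω : Ω) (K : Set ℝ), IsCompact K → ξ ω K < ⊤) : IsSFiniteKernel ξ := by
  classical
  let I : ℤ → Set ℝ := fun n => Set.Ioc (n:ℝ) (n+1)
  have hI : ∀ n, MeasurableSet (I n) := fun n => measurableSet_Ioc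
  have e1 : ξ = Kernel.sum fun n : ℤ => ξ.restrict (hI n) := by
    ext1 ω
    rw [Kernel.sum_apply]
    simp only [Kernel.restrict_apply]
    rw [← Measure.restrict_iUnion]
    · have : (⋃ n, I n) = Set.univ := iUnion_Ioc_intCast ℝ
      rw [this, Measure.restrict_univ]
    · exact Set.pairwise_disjoint_Ioc_intCast ℝ
    · exact hI
  have key : ∀ κ : Kernel Ω ℝ, (∀ ω, κ ω Set.univ < ⊤) → IsSFiniteKernel κ := by
    intro κ hκ
    let f : Ω → ℕ := fun ω => ⌊(κ ω Set.univ).toReal⌋₊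
    have hf : Measurable f := Nat.measurable_floor.comp (κ.measurable_coe MeasurableSet.univ).ennreal_toReal
    have hS : ∀ n, MeasurableSet (f ⁻¹' {n}) := fun n => hf (measurableSet_singleton n)
    have e : κ = Kernel.sum fun n : ℕ => Kernel.piecewise (hS n) κ 0 := by
      ext ω s hs
      rw [Kernel.sum_apply' _ _ hs, tsum_eq_single (f ω)]
      · rw [Kernel.piecewise_apply, if_pos (by simp)]
      · intro n hn
        rw [Kernel.piecewise_apply, if_neg (fun h => hn (by simpa using h.symm))]; simp
    rw [e]
    have : ∀ n : ℕ, IsFiniteKernel (Kernel.piecewise (hS n) κ 0) := by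
      intro n
      refine ⟨⟨ENNReal.ofReal (n+1), ENNReal.ofReal_lt_top, fun ω => ?_⟩⟩
      rw [Kernel.piecewise_apply]
      split_ifs with h
      · rw [← ENNReal.ofReal_toReal (hκ ω).ne]
        apply ENNReal.ofReal_le_ofReal
        have h1 : f ω = n := h
        rw [← h1]
        exact (Nat.lt_floor_add_one _).le
      · simp
    infer_instance
  rw [e1]
  have : ∀ n : ℤ, IsSFiniteKernel (ξ.restrict (hI n)) := by
    refine fun n => key _ fun ω => ?_
    rw [Kernel.restrict_apply, Measure.restrict_apply_univ]
    exact (measure_mono Set.Ioc_subset_Icc_self).trans_lt (hlf ω _ isCompact_Icc)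
  infer_instance

end PalmMS

namespace PalmMS

section
variable {Ω : Type*} [MeasurableSpace Ω] (θ : ℝ → Ω → Ω) (ξ : Kernel Ω ℝ)
  (Q Qstar : Measure Ω) [SigmaFinite Qstar]

noncomputable def k : ℝ → ℝ≥0∞ := (Set.Icc (0:ℝ) 1).indicator 1

lemma k_meas : Measurable k := measurable_one.indicator measurableSet_Icc

lemma lint_k (s : ℝ) : ∫⁻ w, k (s - w) = 1 := by
  rw [lintegral_sub_left_eq_self (μ := volume) k s, k, lintegral_indicator_one measurableSet_Icc]
  simp

lemma palm_lint [IsSFiniteKernel ξ] (hθm : Measurable fun p : ℝ × Ω => θ p.1 p.2)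
    (hPalm : ∀ A : Set Ω, MeasurableSet A →
      Q A = ∫⁻ ω, ξ ω {s ∈ Set.Icc (0 : ℝ) 1 | θ s ω ∈ A} ∂Qstar)
    (h : Ω → ℝ≥0∞) (hh : Measurable h) :
    ∫⁻ ω, h ω ∂Q = ∫⁻ ω, ∫⁻ s, k s * h (θ s ω) ∂(ξ ω) ∂Qstar := by
  have hm : Measurable fun p : Ω × ℝ => θ p.2 p.1 := hθm.comp measurable_swap
  have hS : MeasurableSet (Prod.snd ⁻¹' Set.Icc (0:ℝ) 1 : Set (Ω × ℝ)) := measurable_snd measurableSet_Icc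
  have e : Q = ((Qstar ⊗ₘ ξ).restrict (Prod.snd ⁻¹' Set.Icc (0:ℝ) 1)).map (fun p => θ p.2 p.1) := by
    ext A hA
    rw [hPalm A hA, Measure.map_apply hm hA, Measure.restrict_apply (hm hA),
      Measure.compProd_apply ((hm hA).inter hS)]
    refine lintegral_congr fun ω => ?_
    congr 1
    ext s
    simp [and_comm]
  rw [e, lintegral_map hh hm, ← lintegral_indicator hS, Measure.lintegral_compProd]
  · refine lintegral_congr fun ω => lintegral_congr fun s => ?_
    by_cases hs : s ∈ Set.Icc (0:ℝ) 1
    · rw [Set.indicator_of_mem (by simpa using hs), k, Set.indicator_of_mem hs]; simp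
    · rw [Set.indicator_of_notMem (by simpa using hs), k, Set.indicator_of_notMem hs]; simp
  · exact (hh.comp hm).indicator hS

lemma equiv_map (hequiv : ∀ (t : ℝ) (C : Set ℝ), MeasurableSet C →
      ∀ ω : Ω, ξ (θ t ω) {x : ℝ | x + t ∈ C} = ξ ω C) (t : ℝ) (ω : Ω) :
    (ξ (θ t ω)).map (fun x => x + t) = ξ ω := by
  ext C hC
  rw [Measure.map_apply (by fun_prop) hC]
  exact hequiv t C hC ω

lemma shift [IsSFiniteKernel ξ] (hθm : Measurable fun p : ℝ × Ω => θ p.1 p.2)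
    (hequiv : ∀ (t : ℝ) (C : Set ℝ), MeasurableSet C →
      ∀ ω : Ω, ξ (θ t ω) {x : ℝ | x + t ∈ C} = ξ ω C)
    (hQstarInv : ∀ t : ℝ, Measure.map (θ t) Qstar = Qstar)
    (H : Ω → ℝ → ℝ≥0∞) (hH : Measurable (Function.uncurry H)) (w : ℝ) :
    ∫⁻ ω, ∫⁻ s, H ω s ∂(ξ ω) ∂Qstar = ∫⁻ ω, ∫⁻ s, H (θ w ω) (s - w) ∂(ξ ω) ∂Qstar := by
  have hw : Measurable (θ w) := hθm.comp (measurable_const.prodMk measurable_id)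
  conv_lhs => rw [← hQstarInv w]
  rw [lintegral_map (f := fun ω => ∫⁻ s, H ω s ∂(ξ ω)) (Measurable.lintegral_kernel_prod_right' (κ := ξ) hH) hw]
  refine lintegral_congr fun ω => ?_
  conv_rhs => rw [← equiv_map θ ξ hequiv w ω]
  rw [lintegral_map _ (by fun_prop)]
  · simp [Function.uncurry]
  · have : Measurable fun s : ℝ => (θ w ω, s - w) := by fun_prop
    exact hH.comp this

lemma campbell [IsSFiniteKernel ξ] (hθm : Measurable fun p : ℝ × Ω => θ p.1 p.2)
    (hθadd : ∀ s t : ℝ, θ (s + t) = θ s ∘ θ t)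
    (hequiv : ∀ (t : ℝ) (C : Set ℝ), MeasurableSet C →
      ∀ ω : Ω, ξ (θ t ω) {x : ℝ | x + t ∈ C} = ξ ω C)
    (hQstarInv : ∀ t : ℝ, Measure.map (θ t) Qstar = Qstar)
    (hPalm : ∀ A : Set Ω, MeasurableSet A →
      Q A = ∫⁻ ω, ξ ω {s ∈ Set.Icc (0 : ℝ) 1 | θ s ω ∈ A} ∂Qstar)
    (g : Ω → ℝ → ℝ≥0∞) (hg : Measurable (Function.uncurry g)) :
    ∫⁻ ω, ∫⁻ s, g (θ s ω) s ∂(ξ ω) ∂Qstar = ∫⁻ ω, (∫⁻ u, g ω u) ∂Q := by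
  have hk := k_meas
  have hm : Measurable fun p : Ω × ℝ => θ p.2 p.1 := hθm.comp measurable_swap
  have hm1 : Measurable fun q : (Ω × ℝ) × ℝ => k q.1.2 * g (θ q.1.2 q.1.1) (q.2 + q.1.2) := by
    refine (hk.comp (by fun_prop)).mul (hg.comp (?_ : Measurable fun q : (Ω × ℝ) × ℝ => (θ q.1.2 q.1.1, q.2 + q.1.2)))
    exact (hm.comp measurable_fst).prodMk (by fun_prop)
  have hm2 : Measurable fun q : (Ω × ℝ) × ℝ => k (q.1.2 - q.2) * g (θ q.1.2 q.1.1) q.1.2 := by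
    refine (hk.comp (by fun_prop)).mul (hg.comp (?_ : Measurable fun q : (Ω × ℝ) × ℝ => (θ q.1.2 q.1.1, q.1.2)))
    exact (hm.comp measurable_fst).prodMk (by fun_prop)
  symm
  rw [palm_lint θ ξ Q Qstar hθm hPalm (fun ω => ∫⁻ u, g ω u) (Measurable.lintegral_prod_right' hg)]
  calc ∫⁻ ω, ∫⁻ s, k s * (∫⁻ u, Function.uncurry g (θ s ω, u)) ∂(ξ ω) ∂Qstar
      = ∫⁻ ω, ∫⁻ s, (∫⁻ w, k s * g (θ s ω) (w + s)) ∂(ξ ω) ∂Qstar := by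
        refine lintegral_congr fun ω => lintegral_congr fun s => ?_
        rw [lintegral_const_mul']
        · rw [lintegral_add_right_eq_self (μ := volume) (fun u => g (θ s ω) u) s]; rfl
        · unfold k Set.indicator; split_ifs <;> simp
    _ = ∫⁻ p, (∫⁻ w, k p.2 * g (θ p.2 p.1) (w + p.2)) ∂(Qstar ⊗ₘ ξ) := by
        rw [Measure.lintegral_compProd (Measurable.lintegral_prod_right' hm1)]
    _ = ∫⁻ w, (∫⁻ p, k p.2 * g (θ p.2 p.1) (w + p.2) ∂(Qstar ⊗ₘ ξ)) :=
        lintegral_lintegral_swap hm1.aemeasurable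
    _ = ∫⁻ w, (∫⁻ p, k (p.2 - w) * g (θ p.2 p.1) p.2 ∂(Qstar ⊗ₘ ξ)) := by
        refine lintegral_congr fun w => ?_
        have hw : Measurable fun p : Ω × ℝ => (p, w) := by fun_prop
        have c1 : Measurable fun p : Ω × ℝ => k p.2 * g (θ p.2 p.1) (w + p.2) := hm1.comp hw
        have c2 : Measurable fun p : Ω × ℝ => k (p.2 - w) * g (θ p.2 p.1) p.2 := hm2.comp hw
        rw [Measure.lintegral_compProd c1, Measure.lintegral_compProd c2,
          shift θ ξ Qstar hθm hequiv hQstarInv (fun ω s => k s * g (θ s ω) (w + s)) (hm1.comp hw) w]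
        refine lintegral_congr fun ω => lintegral_congr fun s => ?_
        have : θ (s - w) (θ w ω) = θ s ω := by
          rw [← Function.comp_apply (f := θ (s - w)), ← hθadd, sub_add_cancel]
        rw [this, add_sub_cancel]
    _ = ∫⁻ p, (∫⁻ w, k (p.2 - w) * g (θ p.2 p.1) p.2) ∂(Qstar ⊗ₘ ξ) :=
        (lintegral_lintegral_swap hm2.aemeasurable).symm
    _ = ∫⁻ p, g (θ p.2 p.1) p.2 ∂(Qstar ⊗ₘ ξ) := by
        refine lintegral_congr fun p => ?_
        have c : Measurable fun w => k (p.2 - w) := by fun_prop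
        rw [lintegral_mul_const _ c, lint_k, one_mul]
    _ = _ := by
        rw [Measure.lintegral_compProd]
        exact hg.comp (hm.prodMk measurable_snd)
end

end PalmMS

/-- if `Q` is the Palm measure of `ξ` with respect to a stationary σ-finite
measure `Q*`, then the image of `Q` under `ω ↦ θ_{S_r(ω)}(ω)` equals `Q` for every `r`. -/
theorem palm_implies_mass_stationary {Ω : Type*} [MeasurableSpace Ω]
    (θ : ℝ → Ω → Ω) (hθm : Measurable fun p : ℝ × Ω => θ p.1 p.2)
    (hθ0 : θ 0 = id) (hθadd : ∀ s t : ℝ, θ (s + t) = θ s ∘ θ t)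
    (ξ : Kernel Ω ℝ)
    (hdiffuse : ∀ (ω : Ω) (x : ℝ), ξ ω {x} = 0)
    (hlf : ∀ (ω : Ω) (K : Set ℝ), IsCompact K → ξ ω K < ⊤)
    (hequiv : ∀ (t : ℝ) (C : Set ℝ), MeasurableSet C →
      ∀ ω : Ω, ξ (θ t ω) {x : ℝ | x + t ∈ C} = ξ ω C)
    (Q : Measure Ω) [SigmaFinite Q]
    (hQleft : Q {ω | ξ ω (Set.Iio 0) < ⊤} = 0)
    (hQright : Q {ω | ξ ω (Set.Ioi 0) < ⊤} = 0)
    (Qstar : Measure Ω) [SigmaFinite Qstar]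
    (hQstarInv : ∀ t : ℝ, Measure.map (θ t) Qstar = Qstar)
    (hQstarLeft : Qstar {ω | ξ ω (Set.Iio 0) < ⊤} = 0)
    (hQstarRight : Qstar {ω | ξ ω (Set.Ioi 0) < ⊤} = 0)
    (hPalm : ∀ A : Set Ω, MeasurableSet A →
      Q A = ∫⁻ ω, ξ ω {s ∈ Set.Icc (0 : ℝ) 1 | θ s ω ∈ A} ∂Qstar) :
    ∀ r : ℝ, Measure.map (fun ω => θ (Sr ξ r ω) ω) Q = Q := by
  intro r
  have hsf := PalmMS.sfin ξ hlf
  classical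
  let GS : Set Ω := {ω | ξ ω (Set.Iio 0) = ⊤ ∧ ξ ω (Set.Ioi 0) = ⊤}
  have hGS : MeasurableSet GS :=
    ((ξ.measurable_coe measurableSet_Iio) (measurableSet_singleton ⊤)).inter
      ((ξ.measurable_coe measurableSet_Ioi) (measurableSet_singleton ⊤))
  have hgood : ∀ ω ∈ GS, PalmMS.Good (ξ ω) := fun ω h => ⟨hdiffuse ω, hlf ω, h.1, h.2⟩
  have hmap := PalmMS.equiv_map θ ξ hequiv
  have hadd : ∀ s t ω, θ s (θ t ω) = θ (s + t) ω := fun s t ω => by rw [hθadd]; rfl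
  have hae : ∀ P : Measure Ω, P {ω | ξ ω (Set.Iio 0) < ⊤} = 0 → P {ω | ξ ω (Set.Ioi 0) < ⊤} = 0 →
      ∀ᵐ ω ∂P, ω ∈ GS := by
    intro P h1 h2
    have h1' : ∀ᵐ ω ∂P, ¬ (ξ ω (Set.Iio 0) < ⊤) := by rw [ae_iff]; simpa only [not_not] using h1
    have h2' : ∀ᵐ ω ∂P, ¬ (ξ ω (Set.Ioi 0) < ⊤) := by rw [ae_iff]; simpa only [not_not] using h2
    filter_upwards [h1', h2'] with ω a b
    exact ⟨not_lt_top_iff.1 a, not_lt_top_iff.1 b⟩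
  have hshiftGS : ∀ ω ∈ GS, ∀ s, θ s ω ∈ GS := by
    intro ω hω s
    have a1 : ξ (θ s ω) (Set.Iio (-s)) = ⊤ := by
      have := hequiv s (Set.Iio 0) measurableSet_Iio ω
      rw [hω.1] at this
      convert this using 2
      ext x; simp [lt_neg_iff_add_neg]
    have a2 : ξ (θ s ω) (Set.Ioi (-s)) = ⊤ := by
      have := hequiv s (Set.Ioi 0) measurableSet_Ioi ω
      rw [hω.2] at this
      convert this using 2
      ext x; simp [neg_lt_iff_pos_add]
    constructor
    · by_contra hc
      have h1 : Set.Iio (-s) ⊆ Set.Iio 0 ∪ Set.Icc 0 (-s) := by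
        intro x hx
        rcases lt_or_ge x 0 with h | h
        · exact Or.inl h
        · exact Or.inr ⟨h, le_of_lt hx⟩
      have h2 := (measure_mono h1).trans (measure_union_le (μ := ξ (θ s ω)) _ _)
      rw [a1, top_le_iff, ENNReal.add_eq_top] at h2
      exact h2.elim hc (hlf _ _ isCompact_Icc).ne
    · by_contra hc
      have h1 : Set.Ioi (-s) ⊆ Set.Ioi 0 ∪ Set.Icc (-s) 0 := by
        intro x hx
        rcases lt_or_ge 0 x with h | h
        · exact Or.inl h
        · exact Or.inr ⟨le_of_lt hx, h⟩
      have h2 := (measure_mono h1).trans (measure_union_le (μ := ξ (θ s ω)) _ _)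
      rw [a2, top_le_iff, ENNReal.add_eq_top] at h2
      exact h2.elim hc (hlf _ _ isCompact_Icc).ne
  let S : ℝ → Ω → ℝ := fun r ω => if ω ∈ GS then PalmMS.G (ξ ω) r else 0
  have hS : ∀ r, Measurable (S r) := by
    intro r
    refine measurable_of_Ici fun x => ?_
    have hF : Measurable fun ω => PalmMS.F (ξ ω) x :=
      (ξ.measurable_coe measurableSet_Ioc).ennreal_toReal.sub
        (ξ.measurable_coe measurableSet_Ioc).ennreal_toReal
    have : S r ⁻¹' Set.Ici x = (GS ∩ (fun ω => PalmMS.F (ξ ω) x) ⁻¹' Set.Iic r) ∪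
        (GSᶜ ∩ {ω | x ≤ 0}) := by
      ext ω
      by_cases h : ω ∈ GS
      · simp [S, h, PalmMS.le_G (hgood ω h)]
      · simp [S, h]
    rw [this]
    exact (hGS.inter (hF measurableSet_Iic)).union (hGS.compl.inter (MeasurableSet.const _))
  have hSτ : ∀ ω ∈ GS, ∀ s r, s + S r (θ s ω) = PalmMS.G (ξ ω) (PalmMS.F (ξ ω) s + r) := by
    intro ω hω s r
    have h2 := hshiftGS ω hω s
    simp only [S, if_pos h2]
    exact PalmMS.G_shift (hgood _ hω) (hgood _ h2) s (hmap s ω) r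
  have hT : Measurable fun ω => θ (S r ω) ω := hθm.comp ((hS r).prodMk measurable_id)
  have hTe : (fun ω => θ (Sr ξ r ω) ω) =ᵐ[Q] fun ω => θ (S r ω) ω := by
    filter_upwards [hae Q hQleft hQright] with ω hω
    simp only [S, if_pos hω]
    rw [PalmMS.Sr_eq ξ r ω (hgood ω hω)]
  rw [Measure.map_congr hTe]
  ext A hA
  let f : Ω → ℝ≥0∞ := A.indicator 1
  have hf : Measurable f := measurable_one.indicator hA
  have hk := PalmMS.k_meas
  rw [← lintegral_indicator_one hA, lintegral_map hf hT,
    PalmMS.palm_lint θ ξ Q Qstar hθm hPalm (fun ω => f (θ (S r ω) ω)) (hf.comp hT),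
    ← lintegral_indicator_one hA]
  have hg : Measurable (Function.uncurry fun ω u => PalmMS.k (u + S (-r) ω) * f ω) := by
    have := hS (-r)
    have h3 : Measurable fun p : Ω × ℝ => p.2 + S (-r) p.1 := by fun_prop
    exact (hk.comp h3).mul (hf.comp measurable_fst)
  have hc := PalmMS.campbell θ ξ Q Qstar hθm hθadd hequiv hQstarInv hPalm
    (fun ω u => PalmMS.k (u + S (-r) ω) * f ω) hg
  have hr : ∫⁻ ω, (∫⁻ u, PalmMS.k (u + S (-r) ω) * f ω) ∂Q = ∫⁻ ω, f ω ∂Q := by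
    refine lintegral_congr fun ω => ?_
    have c : Measurable fun u => PalmMS.k (u + S (-r) ω) := by fun_prop
    rw [lintegral_mul_const _ c,
      lintegral_add_right_eq_self (μ := volume) PalmMS.k (S (-r) ω)]
    have := PalmMS.lint_k 0
    rw [lintegral_sub_left_eq_self (μ := volume) PalmMS.k 0] at this
    rw [this, one_mul]
  refine Eq.trans ?_ (hc.trans hr)
  refine lintegral_congr_ae ?_
  filter_upwards [hae Qstar hQstarLeft hQstarRight] with ω hω
  have hG := hgood ω hω
  have hGm : Measurable (PalmMS.G (ξ ω)) := (PalmMS.G_mono hG).measurable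
  have hFm := (PalmMS.F_cont hG).measurable
  have hτ : ∀ r, Measurable fun s => PalmMS.G (ξ ω) (PalmMS.F (ξ ω) s + r) := fun r =>
    hGm.comp (hFm.add_const r)
  have hθω : Measurable fun s => θ s ω := hθm.comp (measurable_id.prodMk measurable_const)
  simp only [hSτ ω hω]
  have hH : Measurable fun u => PalmMS.k (PalmMS.G (ξ ω) (PalmMS.F (ξ ω) u + -r)) * f (θ u ω) :=
    (hk.comp (hτ (-r))).mul (hf.comp hθω)
  have e := lintegral_map (μ := ξ ω) hH (hτ r)
  rw [PalmMS.map_tau hG r] at e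
  rw [e]
  · refine lintegral_congr_ae ?_
    filter_upwards [PalmMS.tau_tau hG r] with s hs
    simp only [hs, Function.comp_apply, hadd]
    rw [add_comm (S r (θ s ω)) s, hSτ ω hω]
end
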